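/- Let n ≥ 3 and ℓ ≥ 1 be integers and put μ = 1/(2(n−1)ℓ). There exist real numbers X₀ > 0 and c > 0 (depending only on n and ℓ) such that for every real X > X₀ there exist at least c·X^μ pairwise non-isomorphic number fields of degree n over ℚ whose discriminant has absolute value at most X and whose ideal class group contains an element of order exactly ℓ. -/

import Mathlib

/-- A finite-dimensional intermediate field of `ℂ/ℚ` is a number field. -/
noncomputable instance (F : IntermediateField ℚ ℂ) [FiniteDimensional ℚ F] :
    NumberField F := ⟨⟩

theorem aux_order {G : Type*} [CommGroup G] [Finite G] (ℓ : ℕ) (hℓ : 1 ≤ ℓ)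
    (h : ∀ p : ℕ, p.Prime → p ∣ ℓ → ∃ c : G, c ^ ℓ = 1 ∧ c ^ (ℓ / p) ≠ 1) :
    ∃ c : G, orderOf c = ℓ := by
  let H : Subgroup G := (powMonoidHom ℓ : G →* G).ker
  have hH : ∀ g : G, g ∈ H ↔ g ^ ℓ = 1 := fun g => by simp [H, MonoidHom.mem_ker]
  obtain ⟨g, hg⟩ := Monoid.exists_orderOf_eq_exponent
    (Monoid.ExponentExists.of_finite : Monoid.ExponentExists H)
  refine ⟨(g : G), ?_⟩
  rw [Subgroup.orderOf_coe, hg]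
  have hdvd : Monoid.exponent H ∣ ℓ := by
    apply Monoid.exponent_dvd_of_forall_pow_eq_one
    intro x
    ext
    simpa using (hH x).1 x.2
  by_contra hne
  obtain ⟨k, hk⟩ := hdvd
  have hk1 : k ≠ 1 := fun h1 => hne (by rw [hk, h1, mul_one])
  obtain ⟨p, hp, hpk⟩ := Nat.exists_prime_and_dvd hk1
  obtain ⟨k', rfl⟩ := hpk
  have hpl : p ∣ ℓ := ⟨Monoid.exponent H * k', by rw [hk]; ring⟩
  obtain ⟨c, hc1, hc2⟩ := h p hp hpl
  apply hc2
  have : ℓ / p = Monoid.exponent H * k' := by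
    apply Nat.div_eq_of_eq_mul_left hp.pos; nth_rw 1 [hk]; ring
  rw [this, pow_mul]
  have h3 := Monoid.pow_exponent_eq_one (⟨c, (hH c).2 hc1⟩ : H)
  have h4 : c ^ Monoid.exponent H = 1 := congrArg Subtype.val h3
  rw [h4, one_pow]

theorem aux_zpow_sum {G ι : Type*} [CommGroup G] (s : Finset ι) (g : G) (h : ι → ℤ) :
    ∏ i ∈ s, g ^ h i = g ^ ∑ i ∈ s, h i := by
  classical
  induction s using Finset.induction_on with
  | empty => simp
  | insert a s ha ih => rw [Finset.prod_insert ha, Finset.sum_insert ha, ih, zpow_add]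

open NumberField in
theorem aux_units {K : Type*} [Field K] [NumberField K] (φ : K →+* ℝ) (m : ℕ)
    (hm : Module.finrank ℚ K ≤ m) (p : ℕ) (hp : p.Prime) (v : Fin m → (𝓞 K)ˣ) :
    ∃ e : Fin m → ℕ, (∀ i, e i < p) ∧ (∃ i, e i ≠ 0) ∧ ∃ ζ : 𝓞 K, (ζ = 1 ∨ ζ = -1) ∧
      ∃ γ : (𝓞 K)ˣ, ∏ i, (v i : 𝓞 K) ^ e i = ζ * (γ : 𝓞 K) ^ p := by
  classical
  have := Fact.mk hp
  have hr : Units.rank K < m := by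
    refine lt_of_lt_of_le ?_ hm
    have h1 : Fintype.card (InfinitePlace K) ≤ Module.finrank ℚ K := by
      rw [← NumberField.Embeddings.card K ℂ]
      exact Fintype.card_le_of_surjective (InfinitePlace.mk)
        (fun w => ⟨w.embedding, InfinitePlace.mk_embedding w⟩)
    have h2 : 0 < Fintype.card (InfinitePlace K) := Fintype.card_pos
    unfold Units.rank
    omega
  choose ζe hζe _ using fun i => Units.exist_unique_eq_mul_prod K (v i)
  let L : (Fin m → ZMod p) →ₗ[ZMod p] (Fin (Units.rank K) → ZMod p) :=
    Matrix.mulVecLin (Matrix.of fun j i => (((ζe i).2 j : ℤ) : ZMod p))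
  obtain ⟨x, hx, hx0⟩ := (Submodule.ne_bot_iff _).1
    (LinearMap.ker_ne_bot_of_finrank_lt (f := L) (by simpa using hr))
  have hx' : ∀ j, ((p : ℕ) : ℤ) ∣ ∑ i, (ζe i).2 j * ((x i).val : ℤ) := by
    intro j
    have := congrFun (LinearMap.mem_ker.1 hx) j
    rw [← ZMod.intCast_zmod_eq_zero_iff_dvd]
    push_cast
    simpa [L, Matrix.mulVec, dotProduct] using this
  choose f hf using hx'
  have htor : ∀ z : (𝓞 K)ˣ, z ∈ Units.torsion K → (z : 𝓞 K) = 1 ∨ (z : 𝓞 K) = -1 := by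
    intro z hz
    have h1 : IsOfFinOrder z := hz
    obtain ⟨k, hk, hk1⟩ := isOfFinOrder_iff_pow_eq_one.1 h1
    have h2 : (φ (z : K)) ^ k = 1 := by
      rw [← map_pow]
      have : ((z : K)) ^ k = 1 := by
        have := congrArg (fun y : (𝓞 K)ˣ => (y : K)) hk1
        simpa using this
      rw [this, map_one]
    have h3 : |φ (z : K)| = 1 := by
      have : |φ (z : K)| ^ k = 1 := by rw [← abs_pow, h2, abs_one]
      exact (pow_eq_one_iff_of_nonneg (abs_nonneg _) (by omega)).1 this
    rcases (abs_eq zero_le_one).1 h3 with h | h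
    · left
      apply RingOfIntegers.coe_injective
      apply φ.injective
      simpa using h
    · right
      apply RingOfIntegers.coe_injective
      apply φ.injective
      simpa using h
  refine ⟨fun i => (x i).val, fun i => ZMod.val_lt _, ?_, ?_⟩
  · by_contra hcon
    push Not at hcon
    exact hx0 (funext fun i => (ZMod.val_eq_zero _).1 (hcon i))
  let ζ : (𝓞 K)ˣ := ∏ i, ((ζe i).1 : (𝓞 K)ˣ) ^ (x i).val
  have hζ : ζ ∈ Units.torsion K := Subgroup.prod_mem _ fun i _ => Subgroup.pow_mem _ (ζe i).1.2 _
  refine ⟨(ζ : 𝓞 K), htor _ hζ, ∏ j, (Units.fundSystem K j) ^ (f j), ?_⟩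
  have key : ∏ i, (v i) ^ (x i).val = ζ * (∏ j, (Units.fundSystem K j) ^ (f j)) ^ p := by
    have : ∀ i, v i ^ (x i).val = ((ζe i).1 : (𝓞 K)ˣ) ^ (x i).val *
        ∏ j, (Units.fundSystem K j) ^ ((ζe i).2 j * ((x i).val : ℤ)) := by
      intro i
      have h := hζe i
      simp only at h
      conv_lhs => rw [h]
      rw [mul_pow, ← Finset.prod_pow]
      congr 1
      refine Finset.prod_congr rfl fun j _ => ?_
      rw [zpow_mul, zpow_natCast]
    rw [Finset.prod_congr rfl fun i _ => this i, Finset.prod_mul_distrib, Finset.prod_comm]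
    congr 1
    rw [← Finset.prod_pow]
    refine Finset.prod_congr rfl fun j _ => ?_
    rw [aux_zpow_sum, hf j, mul_comm, zpow_mul, zpow_natCast]
  have := congrArg (fun y : (𝓞 K)ˣ => (y : 𝓞 K)) key
  simpa using this

open NumberField in
theorem aux_class {K : Type*} [Field K] [NumberField K] (φ : K →+* ℝ) (m ℓ : ℕ) (hℓ : 1 ≤ ℓ)
    (hm : Module.finrank ℚ K ≤ m) (α : Fin m → 𝓞 K) (hα : ∀ i, α i ≠ 0)
    (hI : ∀ i, ∃ I : Ideal (𝓞 K), Ideal.span {α i} = I ^ ℓ)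
    (hind : ∀ p : ℕ, p.Prime → p ∣ ℓ → ∀ e : Fin m → ℕ, (∀ i, e i < p) → ∀ γ ζ : 𝓞 K,
      (ζ = 1 ∨ ζ = -1) → ∏ i, α i ^ e i = ζ * γ ^ p → ∀ i, e i = 0) :
    ∃ C : ClassGroup (𝓞 K), orderOf C = ℓ := by
  classical
  choose I hI using hI
  have hI0 : ∀ i, I i ∈ nonZeroDivisors (Ideal (𝓞 K)) := by
    intro i
    apply mem_nonZeroDivisors_of_ne_zero
    intro h
    have := hI i
    rw [h, zero_pow (by omega)] at this
    exact hα i (by simpa using this)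
  apply aux_order ℓ hℓ
  intro p hp hpl
  by_contra hcon
  push Not at hcon
  have h1 : ∀ i, ∃ β : 𝓞 K, I i ^ (ℓ / p) = Ideal.span {β} := by
    intro i
    have hc := hcon (ClassGroup.mk0 ⟨I i, hI0 i⟩) (by
      rw [← map_pow]
      refine (ClassGroup.mk0_eq_one_iff (pow_mem (hI0 i) ℓ)).2 ?_
      exact ⟨⟨α i, (hI i).symm⟩⟩)
    rw [← map_pow] at hc
    have := (ClassGroup.mk0_eq_one_iff (pow_mem (hI0 i) (ℓ / p))).1 hc
    obtain ⟨⟨β, hβ⟩⟩ := this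
    exact ⟨β, hβ⟩
  choose β hβ using h1
  have h2 : ∀ i, ∃ u : (𝓞 K)ˣ, β i ^ p * (u : 𝓞 K) = α i := by
    intro i
    have : Ideal.span {β i ^ p} = Ideal.span {α i} := by
      rw [← Ideal.span_singleton_pow, ← hβ i, ← pow_mul, hI i, Nat.div_mul_cancel hpl]
    exact Ideal.span_singleton_eq_span_singleton.1 this
  choose u hu using h2
  obtain ⟨e, he1, ⟨i, hi⟩, ζ, hζ, γ, hγ⟩ := aux_units φ m hm p hp u
  apply hi
  refine hind p hp hpl e he1 ((∏ i, β i ^ e i) * (γ : 𝓞 K)) ζ hζ ?_ i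
  calc ∏ i, α i ^ e i = ∏ i, ((β i ^ e i) ^ p * (u i : 𝓞 K) ^ e i) := by
        refine Finset.prod_congr rfl fun i _ => ?_
        rw [← hu i, mul_pow, ← pow_mul, ← pow_mul, mul_comm p]
    _ = _ := by rw [Finset.prod_mul_distrib, hγ, Finset.prod_pow]; ring

theorem aux_ideal {R : Type*} [CommRing R] [IsDedekindDomain R] (m ℓ : ℕ)
    (a t : Fin m → ℤ) (u : ℤ) (x : R) (hx : ∏ i, (x - (a i : R)) = u * x + 1)
    (ht : ∀ i, u * a i + 1 = t i ^ ℓ)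
    (hc : ∀ i, IsCoprime (t i) (∏ j ∈ Finset.univ.erase i, (a i - a j) - u)) (i : Fin m) :
    ∃ I : Ideal R, Ideal.span {x - (a i : R)} = I ^ ℓ := by
  classical
  set P : R := ∏ j ∈ Finset.univ.erase i, (x - (a j : R)) with hP
  have h1 : (x - a i) * P = u * x + 1 := by
    rw [← hx, hP, Finset.mul_prod_erase Finset.univ (fun j => x - (a j : R)) (Finset.mem_univ i)]
  have h2 : (x - a i) * (P - u) = (t i : R) ^ ℓ := by
    have : ((u * a i + 1 : ℤ) : R) = ((t i ^ ℓ : ℤ) : R) := by rw [ht i]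
    push_cast at this
    rw [← this, mul_sub, h1]; ring
  have h3 : (x - (a i : R)) ∣ P - ((∏ j ∈ Finset.univ.erase i, (a i - a j) : ℤ) : R) := by
    rw [← Ideal.mem_span_singleton, ← Ideal.Quotient.eq, hP, map_prod]
    push_cast
    rw [map_prod]
    refine Finset.prod_congr rfl fun j _ => ?_
    rw [Ideal.Quotient.eq, Ideal.mem_span_singleton]
    exact ⟨1, by ring⟩
  have h4 : IsCoprime (x - (a i : R)) (P - u) := by
    have h5 : IsCoprime ((t i : R) ^ ℓ) (((∏ j ∈ Finset.univ.erase i, (a i - a j) - u : ℤ)) : R) := by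
      have := (hc i).map (Int.castRingHom R)
      exact IsCoprime.pow_left (by simpa using this)
    have h6 := h5.of_isCoprime_of_dvd_left (Dvd.intro _ h2)
    obtain ⟨k, hk⟩ := h3
    have : P - u = ((∏ j ∈ Finset.univ.erase i, (a i - a j) - u : ℤ) : R) + (x - a i) * k := by
      rw [← hk]; push_cast; ring
    rw [this]
    exact IsCoprime.add_mul_left_right h6 k
  have h7 : IsCoprime (Ideal.span {x - (a i : R)}) (Ideal.span {P - (u : R)}) := by
    rw [Ideal.isCoprime_span_singleton_iff]; exact h4
  let _ : GCDMonoid (Ideal R) := UniqueFactorizationMonoid.toGCDMonoid _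
  refine exists_eq_pow_of_mul_eq_pow_of_coprime (c := Ideal.span {(t i : R)}) h7 ?_
  rw [Ideal.span_singleton_mul_span_singleton, h2, Ideal.span_singleton_pow]

open NumberField Polynomial in
theorem aux_local {K : Type*} [Field K] [NumberField K] (x : 𝓞 K) (q : ℕ) [Fact q.Prime] (f : ℤ[X])
    (hlift : ∀ z : ℚ_[q], aeval z f = 0 → ∃ φ : K →+* ℚ_[q], φ x = z)
    (h0 : (q : ℤ) ∣ f.eval 0) (h1 : ¬ (q : ℤ) ∣ f.derivative.eval 0) :
    ∃ Ψ : 𝓞 K →+* ZMod q, Ψ x = 0 := by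
  have e0 : (aeval (0 : ℤ_[q]) f) = ((f.eval 0 : ℤ) : ℤ_[q]) := by
    rw [aeval_def, eval₂_at_zero, ← coeff_zero_eq_eval_zero]; simp
  have e1 : (aeval (0 : ℤ_[q]) f.derivative) = ((f.derivative.eval 0 : ℤ) : ℤ_[q]) := by
    rw [aeval_def, eval₂_at_zero, ← coeff_zero_eq_eval_zero]; simp
  have n0 : ‖aeval (0 : ℤ_[q]) f‖ < 1 := by
    rw [e0, PadicInt.norm_int_lt_one_iff_dvd]; exact h0
  have n1 : ‖aeval (0 : ℤ_[q]) f.derivative‖ = 1 := by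
    rw [e1]
    refine le_antisymm (PadicInt.norm_le_one _) (not_lt.1 ?_)
    rw [PadicInt.norm_int_lt_one_iff_dvd]; exact h1
  obtain ⟨z, hz, hz1, -⟩ := hensels_lemma (p := q) (F := f) (a := 0) (by rw [n1]; simpa using n0)
  rw [n1, sub_zero] at hz1
  have hz' : aeval (z : ℚ_[q]) f = 0 := by
    have := congrArg (algebraMap ℤ_[q] ℚ_[q]) hz
    rw [← aeval_algebraMap_apply] at this
    simpa using this
  obtain ⟨φ, hφ⟩ := hlift z hz'
  have hint : ∀ y : 𝓞 K, (φ.comp (algebraMap (𝓞 K) K)) y ∈ PadicInt.subring q := by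
    intro y
    have hy : IsIntegral ℤ (φ (y : K)) := (RingOfIntegers.isIntegral_coe y).map φ.toIntAlgHom
    have hy2 : IsIntegral ℤ_[q] (φ (y : K)) := hy.tower_top
    obtain ⟨c, hc⟩ := IsIntegrallyClosed.isIntegral_iff.1 hy2
    have : (φ.comp (algebraMap (𝓞 K) K)) y = (c : ℚ_[q]) := hc.symm
    rw [this]
    exact c.2
  let Θ : 𝓞 K →+* ℤ_[q] := (φ.comp (algebraMap (𝓞 K) K)).codRestrict (PadicInt.subring q) hint
  refine ⟨(PadicInt.toZMod).comp Θ, ?_⟩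
  have : Θ x = z := Subtype.ext hφ
  rw [RingHom.comp_apply, this]
  have : z ∈ RingHom.ker (PadicInt.toZMod (p := q)) := by
    rw [PadicInt.ker_toZMod, PadicInt.maximalIdeal_eq_span_p]
    exact PadicInt.norm_lt_one_iff_dvd z |>.1 hz1 |> Ideal.mem_span_singleton.2
  exact this

/-- choice of g -/
theorem aux_gen (q ℓ : ℕ) [Fact q.Prime] (hℓ : 1 ≤ ℓ) (hq : 2 * ℓ ∣ q - 1) (hq2 : ℓ + 3 < q) (c : ZMod q) :
    ∃ g : ZMod q, g ≠ 0 ∧ g ^ 2 + c * g + 1 ≠ 0 ∧ ∀ p : ℕ, p.Prime → p ∣ ℓ → 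
      ∀ e e' : ℕ, e < p → e' < p → ∀ z ζ : ZMod q, (ζ = 1 ∨ ζ = -1) → g ^ e * g⁻¹ ^ e' = ζ * z ^ p → e = e' := by
  obtain ⟨g, hg⟩ := IsCyclic.exists_generator (α := (ZMod q)ˣ)
  have ho : orderOf g = q - 1 := by
    rw [orderOf_eq_card_of_forall_mem_zpowers hg, Nat.card_eq_fintype_card, ZMod.card_units]
  have main : ∀ k : ℕ, ∀ p : ℕ, p.Prime → p ∣ ℓ → ∀ e e' : ℕ, e < p → e' < p → ∀ z ζ : ZMod q,
      (ζ = 1 ∨ ζ = -1) → 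
      ((g ^ (1 + ℓ * k) : (ZMod q)ˣ) : ZMod q) ^ e * ((g ^ (1 + ℓ * k) : (ZMod q)ˣ) : ZMod q)⁻¹ ^ e' = ζ * z ^ p → e = e' := by
    intro k p hp hpl e e' he he' z ζ hζ h
    have hz : z ≠ 0 := by
      rintro rfl
      rw [zero_pow hp.ne_zero, mul_zero] at h
      have : ((g ^ (1 + ℓ * k) : (ZMod q)ˣ) : ZMod q) ≠ 0 := Units.ne_zero _
      simp at h
    have hpq : 2 * p ∣ q - 1 := (Nat.mul_dvd_mul_left 2 hpl).trans hq
    obtain ⟨N, hN⟩ := hpq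
    -- ζ is a p-th power
    obtain ⟨ξ, hξ⟩ : ∃ ξ : (ZMod q)ˣ, ζ = (ξ : ZMod q) ^ p := by
      rcases hζ with rfl | rfl
      · exact ⟨1, by simp⟩
      · refine ⟨g ^ N, ?_⟩
        have h2 : ((g : ZMod q) ^ (N * p)) ^ 2 = 1 := by
          rw [← pow_mul, show N * p * 2 = q - 1 by rw [hN]; ring, ← ho, ← Units.val_pow_eq_pow_val, pow_orderOf_eq_one, Units.val_one]
        have h3 : ((g : ZMod q) ^ (N * p)) ≠ 1 := by
          intro h1
          have h4 : g ^ (N * p) = 1 := by ext; simpa using h1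
          have h5 := orderOf_dvd_of_pow_eq_one h4
          rw [ho, hN] at h5
          have : 0 < N * p := by
            rcases Nat.eq_zero_or_pos N with h0 | h0
            · subst h0; omega
            · exact Nat.mul_pos h0 hp.pos
          have := Nat.le_of_dvd this h5
          nlinarith
        rcases sq_eq_one_iff.1 h2 with h6 | h6
        · exact absurd h6 h3
        · rw [← h6]; push_cast; rw [pow_mul]
    obtain ⟨Z, hZ⟩ : ∃ Z : (ZMod q)ˣ, (Z : ZMod q) = z := ⟨Units.mk0 z hz, rfl⟩
    have hU : (g ^ (1 + ℓ * k)) ^ e = (ξ * Z) ^ p * (g ^ (1 + ℓ * k)) ^ e' := by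
      ext
      rw [hξ, ← hZ, ← mul_pow] at h
      push_cast at h ⊢
      rw [← h, mul_assoc, ← mul_pow, inv_mul_cancel₀ (by simp), one_pow, mul_one]
    obtain ⟨s, hs⟩ := hg (ξ * Z)
    simp only at hs
    rw [← hs] at hU
    have hU2 : g ^ (((1 + ℓ * k) * e : ℕ) - s * p - ((1 + ℓ * k) * e' : ℕ) : ℤ) = 1 := by
      rw [zpow_sub, zpow_sub, zpow_natCast, zpow_natCast, pow_mul, hU, zpow_mul, zpow_natCast, pow_mul]
      group
    have hd := orderOf_dvd_iff_zpow_eq_one.2 hU2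
    rw [ho] at hd
    have hd2 : (p : ℤ) ∣ (((1 + ℓ * k) * e : ℕ) - s * p - ((1 + ℓ * k) * e' : ℕ) : ℤ) := 
      dvd_trans (Int.natCast_dvd_natCast.2 ⟨2 * N, by rw [hN]; ring⟩) hd
    obtain ⟨l', hl'⟩ := hpl
    have hd3 : (p : ℤ) ∣ (e : ℤ) - e' := by
      obtain ⟨y, hy⟩ := hd2
      refine ⟨y + s - l' * k * e + l' * k * e', ?_⟩
      subst hl'
      push_cast at hy
      linear_combination hy
    obtain ⟨y, hy⟩ := hd3
    have : y = 0 := by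
      by_contra hy0
      rcases lt_or_gt_of_ne hy0 with h0 | h0 <;> nlinarith
    subst this
    omega
  by_cases hb : (g : ZMod q) ^ 2 + c * g + 1 = 0
  · refine ⟨((g ^ (1 + ℓ * 1) : (ZMod q)ˣ) : ZMod q), Units.ne_zero _, ?_, main 1⟩
    intro hb2
    set h : ZMod q := ((g ^ (1 + ℓ * 1) : (ZMod q)ˣ) : ZMod q) with hh
    have h1 : ((g : ZMod q) - h) * (g + h + c) = 0 := by linear_combination hb - hb2
    rcases mul_eq_zero.1 h1 with h2 | h2
    · have h3 : g ^ ℓ = 1 := by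
        ext
        have h4 : (g : ZMod q) = g * g ^ ℓ := by
          rw [sub_eq_zero] at h2
          nth_rw 1 [h2]; rw [hh]; push_cast; ring
        push_cast
        exact (mul_eq_left₀ (Units.ne_zero g)).1 h4.symm
      have := Nat.le_of_dvd hℓ (orderOf_dvd_of_pow_eq_one h3)
      omega
    · have h3 : g ^ (ℓ + 2) = 1 := by
        ext
        have : (g : ZMod q) * h = 1 := by linear_combination g * h2 - hb
        rw [hh] at this
        push_cast at this ⊢
        rw [← this]; ring
      have := Nat.le_of_dvd (by omega) (orderOf_dvd_of_pow_eq_one h3)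
      omega
  · refine ⟨g, Units.ne_zero g, hb, ?_⟩
    have := main 0
    rw [mul_zero, add_zero, pow_one] at this
    exact this

theorem aux_ivt (a δ m M : ℝ) (hδ : 0 ≤ δ) (hm : 0 < m) (Q s : ℝ → ℝ) (hQ : Continuous Q) (hs : Continuous s)
    (h1 : ∀ x, |x - a| ≤ δ → m ≤ |Q x|) (h2 : ∀ x, |x - a| ≤ δ → |s x| ≤ M) (h3 : M ≤ m * δ) :
    ∃ r, |r - a| ≤ δ ∧ (r - a) * Q r = s r := by
  have hQ0 : ∀ x ∈ Set.Icc (a - δ) (a + δ), Q x ≠ 0 := by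
    intro x hx h0
    have := h1 x (abs_le.2 ⟨by linarith [hx.1], by linarith [hx.2]⟩)
    rw [h0, abs_zero] at this; linarith
  have hcont : ContinuousOn (fun x => (x - a) - s x / Q x) (Set.Icc (a - δ) (a + δ)) :=
    (continuous_id.sub continuous_const).continuousOn.sub
      (hs.continuousOn.div hQ.continuousOn hQ0)
  have hb : ∀ x, |x - a| ≤ δ → |s x / Q x| ≤ δ := by
    intro x hx
    rw [abs_div, div_le_iff₀ (lt_of_lt_of_le hm (h1 x hx))]
    calc |s x| ≤ M := h2 x hx
      _ ≤ m * δ := h3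
      _ ≤ δ * |Q x| := by rw [mul_comm]; exact mul_le_mul_of_nonneg_left (h1 x hx) hδ
  have e1 := abs_le.1 (hb (a - δ) (by simp [abs_of_nonneg hδ]))
  have e2 := abs_le.1 (hb (a + δ) (by simp [abs_of_nonneg hδ]))
  have := intermediate_value_Icc (by linarith : a - δ ≤ a + δ) hcont
  obtain ⟨r, hr, hr0⟩ := this (show (0 : ℝ) ∈ _ from ⟨by linarith [e1.1], by linarith [e2.2]⟩)
  refine ⟨r, abs_le.2 ⟨by linarith [hr.1], by linarith [hr.2]⟩, ?_⟩
  have hq := hQ0 r hr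
  simp only at hr0
  field_simp at hr0
  linarith

theorem aux_roots (d : ℕ) (hd : 2 ≤ d) (b : Fin (d + 1) → ℤ) (hb : Function.Injective b) (S : ℝ) (hS : 1 ≤ S)
    (u : ℤ) (hu : 1 ≤ u) (hbS : ∀ i : Fin d, |(b i.castSucc : ℝ)| ≤ S)
    (C : ℝ) (hC : C = 2 ^ d * 4 * (u * (S + 1) + 1)) (hA : 4 * C ≤ (b (Fin.last d) : ℝ)) :
    ∃ ρ : Fin (d + 1) → ℝ, ∀ i, |ρ i - b i| ≤ C / b (Fin.last d) ∧
      ∏ j, (ρ i - (b j : ℝ)) = u * ρ i + 1 := by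
  set A : ℝ := (b (Fin.last d) : ℝ) with hAdef
  have hu' : (1 : ℝ) ≤ u := by exact_mod_cast hu
  have h2d : (1 : ℝ) ≤ 2 ^ d := one_le_pow₀ (by norm_num)
  set M : ℝ := u * (S + 1) + 1 with hM
  have hMS : S + 2 ≤ M := by nlinarith
  have hCM : 4 * M ≤ C := by rw [hC]; nlinarith
  have hApos : 0 < A := by linarith
  have hδ0 : 0 ≤ C / A := by apply div_nonneg <;> linarith
  have hδ : C / A ≤ 1 / 4 := by rw [div_le_iff₀ hApos]; linarith
  suffices H : ∀ i, ∃ r : ℝ, |r - b i| ≤ C / A ∧ ∏ j, (r - (b j : ℝ)) = u * r + 1 by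
    choose ρ hρ using H
    exact ⟨ρ, hρ⟩
  intro i
  have hprod : ∀ r : ℝ, ∏ j, (r - (b j : ℝ)) = (r - b i) * ∏ j ∈ Finset.univ.erase i, (r - (b j : ℝ)) :=
    fun r => (Finset.mul_prod_erase Finset.univ (fun j => r - (b j : ℝ)) (Finset.mem_univ i)).symm
  simp_rw [hprod]
  have hsep : ∀ j, j ≠ i → ∀ x : ℝ, |x - b i| ≤ C / A → 1 / 2 ≤ |x - b j| := by
    intro j hj x hx
    have h1 : (1 : ℝ) ≤ |(b i : ℝ) - b j| := by
      have : b i - b j ≠ 0 := sub_ne_zero.2 fun h => hj (hb h.symm)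
      exact_mod_cast Int.one_le_abs this
    have h2 : |(b i : ℝ) - b j| ≤ |x - b i| + |x - b j| := by
      rw [abs_sub_comm x (b i)]
      have := abs_add_le ((b i : ℝ) - x) (x - b j)
      simpa using this
    linarith
  rcases Fin.eq_castSucc_or_eq_last i with ⟨i, rfl⟩ | rfl
  · refine aux_ivt (b i.castSucc) (C / A) (A / 2 ^ d) M hδ0 (by positivity)
      (fun r => ∏ j ∈ Finset.univ.erase i.castSucc, (r - (b j : ℝ))) (fun r => u * r + 1) (by fun_prop) (by fun_prop) ?_ ?_ ?_
    · intro x hx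
      rw [Finset.abs_prod]
      let g : Fin (d + 1) → ℝ := fun j => if j = Fin.last d then A / 2 else 1 / 2
      have hg : ∏ j ∈ Finset.univ.erase i.castSucc, g j = A / 2 ^ d := by
        have h1 := Finset.mul_prod_erase Finset.univ g (Finset.mem_univ i.castSucc)
        rw [Fin.prod_univ_castSucc] at h1
        have h2 : ∀ j : Fin d, g j.castSucc = 1 / 2 := fun j => by simp [g]
        have h3 : g (Fin.last d) = A / 2 := by simp [g]
        simp only [h2, h3, Finset.prod_const, Finset.card_univ, Fintype.card_fin] at h1
        have : (1 / 2 : ℝ) ^ d * (A / 2) = 1 / 2 * (A / 2 ^ d) := by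
          rw [one_div, inv_pow]; ring
        rw [this] at h1
        linarith
      rw [← hg]
      refine Finset.prod_le_prod (fun j _ => ?_) (fun j hj => ?_)
      · simp only [g]; split_ifs <;> linarith
      · simp only [g]
        split_ifs with h
        · subst h
          have := abs_le.1 hx
          have h5 := abs_le.1 (hbS i)
          rw [abs_sub_comm]
          refine le_trans ?_ (le_abs_self _)
          linarith
        · exact hsep j (Finset.ne_of_mem_erase hj) x hx
    · intro x hx
      have := abs_le.1 hx
      have h5 := abs_le.1 (hbS i)
      have h6 : |x| ≤ S + 1 := abs_le.2 ⟨by linarith, by linarith⟩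
      calc |u * x + 1| ≤ |u * x| + |1| := abs_add_le _ _
        _ = u * |x| + 1 := by rw [abs_mul, abs_of_pos (by linarith : (0 : ℝ) < u), abs_one]
        _ ≤ M := by rw [hM]; nlinarith
    · have : A / 2 ^ d * (C / A) = 4 * M := by rw [hC]; field_simp
      rw [this]; linarith
  · refine aux_ivt A (C / A) ((A / 2) ^ d) (M * A) hδ0 (by positivity)
      (fun r => ∏ j ∈ Finset.univ.erase (Fin.last d), (r - (b j : ℝ))) (fun r => u * r + 1) (by fun_prop) (by fun_prop) ?_ ?_ ?_
    · intro x hx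
      rw [Finset.abs_prod]
      have : (A / 2) ^ d = ∏ j ∈ Finset.univ.erase (Fin.last d), (A / 2) := by
        rw [Finset.prod_const, Finset.card_erase_of_mem (Finset.mem_univ _)]; simp
      rw [this]
      refine Finset.prod_le_prod (fun j _ => by linarith) (fun j hj => ?_)
      rcases Fin.eq_castSucc_or_eq_last j with ⟨j, rfl⟩ | rfl
      · have := abs_le.1 hx
        have h5 := abs_le.1 (hbS j)
        refine le_trans ?_ (le_abs_self _)
        linarith
      · simp at hj
    · intro x hx
      have := abs_le.1 hx
      have h6 : |x| ≤ A + 1 := abs_le.2 ⟨by linarith, by linarith⟩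
      calc |u * x + 1| ≤ |u * x| + |1| := abs_add_le _ _
        _ = u * |x| + 1 := by rw [abs_mul, abs_of_pos (by linarith : (0 : ℝ) < u), abs_one]
        _ ≤ u * (A + 1) + 1 := by nlinarith
        _ ≤ M * A := by
          have h7 : 2 * u + 1 ≤ M := by rw [hM]; nlinarith
          have : (1 : ℝ) ≤ A := by linarith
          nlinarith
    · have h7 : (A / 2) ^ 2 ≤ (A / 2) ^ d := pow_le_pow_right₀ (by linarith) hd
      have h8 : (A / 2) ^ 2 * (C / A) = A * C / 4 := by field_simp; ring
      calc M * A ≤ A * C / 4 := by nlinarith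
        _ = _ := h8.symm
        _ ≤ _ := mul_le_mul_of_nonneg_right h7 hδ0

open Polynomial in
theorem aux_factor (d : ℕ) (b : Fin (d + 1) → ℤ) (u : ℤ) (f : ℤ[X])
    (hf : f = ∏ i, (X - C (b i)) - (C u * X + 1)) (hd : 2 ≤ d) (ρ : Fin (d + 1) → ℝ) (hρ : Function.Injective ρ)
    (hr : ∀ i, ∏ j, (ρ i - (b j : ℝ)) = u * ρ i + 1) :
    f.Monic ∧ f.natDegree = d + 1 ∧ f.map (Int.castRingHom ℝ) = ∏ i, (X - C (ρ i)) := by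
  have hlin : (C u * X + 1 : ℤ[X]).degree ≤ 1 := by
    have := degree_linear_le (a := u) (b := 1); simpa using this
  have hP : (∏ i, (X - C (b i)) : ℤ[X]).Monic := monic_prod_of_monic _ _ fun i _ => monic_X_sub_C _
  have hPd : (∏ i, (X - C (b i)) : ℤ[X]).natDegree = d + 1 := by
    rw [natDegree_prod_of_monic _ _ fun i _ => monic_X_sub_C _]; simp only [natDegree_X_sub_C]; simp
  have hlt : (C u * X + 1 : ℤ[X]).degree < (∏ i, (X - C (b i)) : ℤ[X]).degree := by
    rw [degree_eq_natDegree hP.ne_zero, hPd]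
    refine lt_of_le_of_lt hlin ?_
    exact_mod_cast (by omega : 1 < d + 1)
  have hm : f.Monic := by rw [hf]; exact hP.sub_of_left hlt
  have hdeg : f.natDegree = d + 1 := by
    rw [hf, natDegree_eq_of_degree_eq (degree_sub_eq_left_of_degree_lt hlt), hPd]
  refine ⟨hm, hdeg, ?_⟩
  have hm' := hm.map (Int.castRingHom ℝ)
  have hroot : ∀ i, (f.map (Int.castRingHom ℝ)).IsRoot (ρ i) := by
    intro i
    have := hr i
    rw [IsRoot, hf]
    simp [Polynomial.map_prod, eval_prod, this]
  have hdvd : ∏ i, (X - C (ρ i)) ∣ f.map (Int.castRingHom ℝ) := by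
    refine Finset.prod_dvd_of_coprime (fun i _ j _ hij => ?_) (fun i _ => dvd_iff_isRoot.2 (hroot i))
    exact pairwise_coprime_X_sub_C hρ hij
  refine (eq_of_monic_of_dvd_of_natDegree_le (monic_prod_of_monic _ _ fun i _ => monic_X_sub_C _) hm' hdvd ?_).symm ▸ rfl
  rw [hm.natDegree_map, hdeg, natDegree_prod_of_monic _ _ fun i _ => monic_X_sub_C _]; simp

open Polynomial in
theorem aux_irred (d : ℕ) (b : Fin (d + 1) → ℤ) (u : ℤ) (f : ℤ[X])
    (hf : f = ∏ i, (X - C (b i)) - (C u * X + 1)) (ρ : Fin (d + 1) → ℝ) (hρ : Function.Injective ρ)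
    (hfm : f.Monic) (hfd : f.natDegree = d + 1) (hfp : f.map (Int.castRingHom ℝ) = ∏ i, (X - C (ρ i)))
    (S δ : ℝ) (hS : 1 ≤ S) (hδ : δ ≤ 1) (hδS : δ * (2 * S + 1) ^ d < 1)
    (hbS : ∀ i : Fin d, |(b i.castSucc : ℝ)| ≤ S) (hρb : ∀ i, |ρ i - b i| ≤ δ)
    (hu : ∀ i, u * b i + 1 ≠ 0) : Irreducible (f.map (Int.castRingHom ℚ)) := by
  have key : ∀ g h : ℤ[X], g.Monic → h.Monic → g * h = f → (h.map (Int.castRingHom ℝ)).IsRoot (ρ (Fin.last d)) →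
      g.natDegree = 0 := by
    intro g h hg hh hgh hroot
    set g' := g.map (Int.castRingHom ℝ) with hg'
    set h' := h.map (Int.castRingHom ℝ) with hh'
    have hgm : g'.Monic := hg.map _
    have hhm : h'.Monic := hh.map _
    have hgh' : g' * h' = ∏ i, (X - C (ρ i)) := by rw [hg', hh', ← Polynomial.map_mul, hgh, hfp]
    have hroots : g'.roots + h'.roots = Finset.univ.val.map ρ := by
      rw [← roots_mul (mul_ne_zero hgm.ne_zero hhm.ne_zero), hgh']
      exact roots_multiset_prod_X_sub_C (Finset.univ.val.map ρ) ▸ by rw [Multiset.map_map]; rfl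
    have hnd : (g'.roots + h'.roots).Nodup := by rw [hroots]; exact Multiset.Nodup.map hρ Finset.univ.nodup
    have hnotin : ρ (Fin.last d) ∉ g'.roots := by
      intro hin
      exact (Multiset.disjoint_left.1 (Multiset.nodup_add.1 hnd).2.2 hin) ((mem_roots hhm.ne_zero).2 hroot)
    have hspl : g'.Splits := by
      have : (g' * h').Splits := by rw [hgh']; exact Splits.prod fun i _ => Splits.X_sub_C _
      exact this.of_dvd (by rw [hgh']; exact (monic_prod_of_monic _ _ fun i _ => monic_X_sub_C _).ne_zero) (dvd_mul_right _ _)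
    by_contra hne
    have hcard : g'.roots.card = g.natDegree := by
      rw [← hspl.natDegree_eq_card_roots, hg', hg.natDegree_map]
    obtain ⟨r, hr⟩ := Multiset.card_pos_iff_exists_mem.1 (by rw [hcard]; omega : 0 < g'.roots.card)
    have hmem : ∀ r ∈ g'.roots, ∃ i : Fin d, r = ρ i.castSucc := by
      intro r hr
      have : r ∈ Finset.univ.val.map ρ := by rw [← hroots]; exact Multiset.mem_add.2 (Or.inl hr)
      obtain ⟨i, -, rfl⟩ := Multiset.mem_map.1 this
      rcases Fin.eq_castSucc_or_eq_last i with ⟨j, rfl⟩ | rfl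
      · exact ⟨j, rfl⟩
      · exact absurd hr hnotin
    obtain ⟨k, rfl⟩ := hmem r hr
    have hev : g'.eval ((b k.castSucc : ℤ) : ℝ) = (g'.roots.map fun r => ((b k.castSucc : ℤ) : ℝ) - r).prod := by
      conv_lhs => rw [hspl.eq_prod_roots_of_monic hgm]
      rw [eval_multiset_prod, Multiset.map_map]; simp
    have hle : |g'.eval ((b k.castSucc : ℤ) : ℝ)| < 1 := by
      rw [hev]
      have e1 : (g'.roots.map fun r => ((b k.castSucc : ℤ) : ℝ) - r).prod = ∏ r ∈ g'.roots.toFinset, (((b k.castSucc : ℤ) : ℝ) - r) := by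
        rw [Finset.prod, Multiset.toFinset_val, Multiset.dedup_eq_self.2 (Multiset.nodup_add.1 hnd).1]
      rw [e1, Finset.abs_prod, ← Finset.mul_prod_erase _ _ (Multiset.mem_toFinset.2 hr)]
      have h0 : |((b k.castSucc : ℤ) : ℝ) - ρ k.castSucc| ≤ δ := by rw [abs_sub_comm]; exact hρb _
      have hδ0 : 0 ≤ δ := le_trans (abs_nonneg _) h0
      have h1 : ∏ r ∈ g'.roots.toFinset.erase (ρ k.castSucc), |((b k.castSucc : ℤ) : ℝ) - r| ≤ (2 * S + 1) ^ d := by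
        calc _ ≤ ∏ r ∈ g'.roots.toFinset.erase (ρ k.castSucc), (2 * S + 1) := by
              refine Finset.prod_le_prod (fun _ _ => abs_nonneg _) (fun r hr => ?_)
              obtain ⟨j, rfl⟩ := hmem r (Multiset.mem_toFinset.1 (Finset.mem_of_mem_erase hr))
              have a1 := abs_le.1 (hbS k)
              have a2 := abs_le.1 (hbS j)
              have a3 := abs_le.1 (hρb j.castSucc)
              exact abs_le.2 ⟨by linarith, by linarith⟩
          _ = (2 * S + 1) ^ (g'.roots.toFinset.erase (ρ k.castSucc)).card := by rw [Finset.prod_const]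
          _ ≤ (2 * S + 1) ^ d := by
              refine pow_le_pow_right₀ (by linarith) ?_
              rw [Finset.card_erase_of_mem (Multiset.mem_toFinset.2 hr)]
              have : g'.roots.toFinset.card ≤ d + 1 := by
                refine (Multiset.toFinset_card_le _).trans ?_
                have := congrArg Multiset.card hroots
                rw [Multiset.card_add, Multiset.card_map] at this
                simp at this
                omega
              omega
      calc _ ≤ δ * (2 * S + 1) ^ d := mul_le_mul h0 h1 (Finset.prod_nonneg fun _ _ => abs_nonneg _) hδ0
        _ < 1 := hδS
    have hz : g.eval (b k.castSucc) = 0 := by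
      have e : g'.eval ((b k.castSucc : ℤ) : ℝ) = ((g.eval (b k.castSucc) : ℤ) : ℝ) := by
        rw [hg']; exact eval_intCast_map _ _ _
      rw [e] at hle
      exact Int.abs_lt_one_iff.1 (by exact_mod_cast hle)
    have : f.eval (b k.castSucc) = 0 := by rw [← hgh, eval_mul, hz, zero_mul]
    rw [hf] at this
    simp only [eval_sub, eval_prod, eval_X, eval_C, eval_add, eval_mul, eval_one] at this
    rw [Finset.prod_eq_zero (Finset.mem_univ k.castSucc) (by simp)] at this
    exact hu k.castSucc (by linarith)
  have hirr : Irreducible f := by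
    refine (hfm.irreducible_iff_natDegree).2 ⟨?_, ?_⟩
    · intro h; rw [h] at hfd; simp at hfd
    · intro g h hg hh hgh
      have : (f.map (Int.castRingHom ℝ)).eval (ρ (Fin.last d)) = 0 := by
        rw [hfp, eval_prod]; exact Finset.prod_eq_zero (Finset.mem_univ (Fin.last d)) (by simp)
      rw [← hgh, Polynomial.map_mul, eval_mul, mul_eq_zero] at this
      rcases this with h1 | h1
      · exact Or.inr (key h g hh hg (by rw [mul_comm]; exact hgh) h1)
      · exact Or.inl (key g h hg hh hgh h1)
  exact (hfm.irreducible_iff_irreducible_map_fraction_map (K := ℚ)).1 hirr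

open NumberField in
theorem aux_emb {K : Type*} [Field K] [NumberField K] (n : ℕ) (hfin : Module.finrank ℚ K = n) (x : 𝓞 K)
    (σ : Fin n → (K →+* ℝ)) (ρ : Fin n → ℝ) (hρ : Function.Injective ρ) (hσ : ∀ i, σ i x = ρ i) :
    (∀ z : 𝓞 K, z ≠ 0 → 1 ≤ ∏ i, |σ i z|) ∧
    (|(discr K : ℝ)| ≤ (∏ i : Fin n, ∏ j ∈ Finset.Ioi i, |ρ j - ρ i|) ^ 2) ∧
    Function.Bijective σ := by
  classical
  let e0 : Fin n → (K →ₐ[ℚ] ℂ) := fun i => (Complex.ofRealHom.comp (σ i)).toRatAlgHom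
  have he0 : ∀ i z, e0 i z = ((σ i z : ℝ) : ℂ) := fun i z => rfl
  have hinj : Function.Injective e0 := by
    intro i j h
    have := congrArg (fun φ : K →ₐ[ℚ] ℂ => φ x) h
    simp only [he0, hσ] at this
    exact hρ (by exact_mod_cast this)
  have hbij : Function.Bijective e0 := by
    rw [Fintype.bijective_iff_injective_and_card]
    refine ⟨hinj, ?_⟩
    rw [AlgHom.card, hfin, Fintype.card_fin]
  let e : Fin n ≃ (K →ₐ[ℚ] ℂ) := Equiv.ofBijective e0 hbij
  have he : ∀ i z, e i z = ((σ i z : ℝ) : ℂ) := fun i z => rfl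
  refine ⟨?_, ?_, ?_⟩
  · intro z hz
    have h1 := Algebra.norm_eq_prod_embeddings ℚ ℂ (z : K)
    rw [← e.prod_comp] at h1
    simp only [he] at h1
    have h2 : ((Algebra.norm ℚ (z : K) : ℚ) : ℝ) = ∏ i, σ i z := by
      have : (((Algebra.norm ℚ (z : K) : ℚ) : ℝ) : ℂ) = ((∏ i, σ i z : ℝ) : ℂ) := by
        push_cast; rw [← h1]; simp
      exact_mod_cast this
    rw [← Finset.abs_prod, ← h2, ← Algebra.coe_norm_int]
    have : Algebra.norm ℤ z ≠ 0 := Algebra.norm_ne_zero_iff.2 hz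
    have := Int.one_le_abs this
    push_cast
    exact_mod_cast this
  · let B := (RingOfIntegers.basis K).reindex (Fintype.equivFinOfCardEq (n := n) (by
        rw [← Module.finrank_eq_card_basis (RingOfIntegers.basis K), RingOfIntegers.rank, hfin]))
    let v : Fin n → 𝓞 K := fun i => x ^ (i : ℕ)
    let P := B.toMatrix v
    have hv : discr K * P.det ^ 2 = Algebra.discr ℤ v := by
      have h1 := Algebra.discr_of_matrix_vecMul (A := ℤ) (B : Fin n → 𝓞 K) P
      rw [Module.Basis.toMatrix_map_vecMul, discr_eq_discr] at h1
      rw [h1, mul_comm]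
    have hvQ : ((Algebra.discr ℤ v : ℤ) : ℚ) = Algebra.discr ℚ (fun i => (v i : K)) := by
      rw [Algebra.discr_def, Algebra.discr_def, ← eq_intCast (algebraMap ℤ ℚ), RingHom.map_det]
      congr 1
      ext i j
      simp only [RingHom.mapMatrix_apply, Matrix.map_apply, Algebra.traceMatrix_apply, Algebra.traceForm_apply]
      rw [← map_mul]
      exact Algebra.coe_trace_int (v i * v j)
    have hV := Algebra.discr_eq_det_embeddingsMatrixReindex_pow_two ℚ ℂ (fun i => (v i : K)) e
    have hM : Algebra.embeddingsMatrixReindex ℚ ℂ (fun i => (v i : K)) e =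
        (Matrix.vandermonde (fun i => ((ρ i : ℝ) : ℂ))).transpose := by
      ext i j
      simp [Algebra.embeddingsMatrixReindex, Algebra.embeddingsMatrix, Matrix.vandermonde, he, v, hσ]
    rw [hM, Matrix.det_transpose, Matrix.det_vandermonde, ← hvQ, ← hv] at hV
    have hR : (discr K : ℝ) * (P.det : ℝ) ^ 2 = (∏ i : Fin n, ∏ j ∈ Finset.Ioi i, (ρ j - ρ i)) ^ 2 := by
      have : (((discr K : ℝ) * (P.det : ℝ) ^ 2 : ℝ) : ℂ) = (((∏ i : Fin n, ∏ j ∈ Finset.Ioi i, (ρ j - ρ i)) ^ 2 : ℝ) : ℂ) := by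
        rw [Complex.ofReal_pow, Complex.ofReal_prod]; simp only [Complex.ofReal_prod, Complex.ofReal_sub]; rw [← hV, eq_ratCast, Rat.cast_intCast]; exact_mod_cast rfl
      exact_mod_cast this
    have hne : (∏ i : Fin n, ∏ j ∈ Finset.Ioi i, (ρ j - ρ i)) ≠ 0 := by
      refine Finset.prod_ne_zero_iff.2 fun i _ => Finset.prod_ne_zero_iff.2 fun j hj => ?_
      exact sub_ne_zero.2 (hρ.ne (Finset.mem_Ioi.1 hj).ne')
    have hdet : P.det ≠ 0 := by
      intro h
      rw [h] at hR
      simp only [Int.cast_zero, ne_eq, OfNat.ofNat_ne_zero, not_false_eq_true, zero_pow, mul_zero] at hR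
      exact hne (pow_eq_zero_iff (two_ne_zero) |>.1 hR.symm)
    have hdet1 : (1 : ℝ) ≤ (P.det : ℝ) ^ 2 := by
      have := Int.one_le_abs hdet
      have : (1 : ℝ) ≤ |(P.det : ℝ)| := by exact_mod_cast this
      rw [← sq_abs]; nlinarith
    have habs : (∏ i : Fin n, ∏ j ∈ Finset.Ioi i, |ρ j - ρ i|) ^ 2 = (∏ i : Fin n, ∏ j ∈ Finset.Ioi i, (ρ j - ρ i)) ^ 2 := by
      rw [← sq_abs (∏ i : Fin n, ∏ j ∈ Finset.Ioi i, (ρ j - ρ i))]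
      simp only [Finset.abs_prod]
    rw [habs, ← abs_of_nonneg (sq_nonneg (∏ i : Fin n, ∏ j ∈ Finset.Ioi i, (ρ j - ρ i))), ← hR, abs_mul, abs_of_nonneg (sq_nonneg (P.det : ℝ))]
    nlinarith [abs_nonneg (discr K : ℝ)]
  · refine ⟨fun i j h => hρ (by rw [← hσ, ← hσ, h]), fun φ => ?_⟩
    obtain ⟨i, hi⟩ := hbij.2 (Complex.ofRealHom.comp φ).toRatAlgHom
    refine ⟨i, RingHom.ext fun z => ?_⟩
    have h1 := congrArg (fun ψ : K →ₐ[ℚ] ℂ => ψ z) hi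
    have h2 : ((σ i z : ℝ) : ℂ) = ((φ z : ℝ) : ℂ) := h1
    exact_mod_cast h2

open NumberField Polynomial IntermediateField in
theorem aux_field (n : ℕ) (f : ℤ[X]) (ρ : Fin n → ℝ) (i0 : Fin n) 
    (hfm : f.Monic) (hfd : f.natDegree = n) (hfp : f.map (Int.castRingHom ℝ) = ∏ i, (X - C (ρ i)))
    (hirr : Irreducible (f.map (Int.castRingHom ℚ))) :
    ∃ (K : IntermediateField ℚ ℂ) (_ : FiniteDimensional ℚ K) (x : 𝓞 K) (σ : Fin n → (K →+* ℝ)),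
      Module.finrank ℚ K = n ∧ (∀ i, σ i x = ρ i) ∧ aeval x f = 0 ∧
      (∀ (q : ℕ) [Fact q.Prime], ∀ z : ℚ_[q], aeval z f = 0 → ∃ φ : K →+* ℚ_[q], φ x = z) := by
  have hfr : ∀ i, aeval (ρ i) f = 0 := by
    intro i
    rw [aeval_def, ← eval_map, algebraMap_int_eq, hfp, eval_prod]
    exact Finset.prod_eq_zero (Finset.mem_univ i) (by simp)
  let r : ℂ := ((ρ i0 : ℝ) : ℂ)
  have hr : aeval r f = 0 := by
    have := aeval_algebraMap_apply ℂ (ρ i0) f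
    rw [hfr, map_zero] at this
    exact this
  have hmin : minpoly ℚ r = f.map (Int.castRingHom ℚ) := by
    refine (minpoly.eq_of_irreducible_of_monic hirr ?_ (hfm.map _)).symm
    have := aeval_map_algebraMap ℚ r f
    rw [hr] at this
    exact this
  have hint : IsIntegral ℚ r := ⟨f.map (Int.castRingHom ℚ), hfm.map _, by
    rw [← aeval_def, ← hmin]; exact minpoly.aeval _ _⟩
  have hlift : ∀ (L : Type) [Field L] [CharZero L] (z : L), aeval z f = 0 → ∃ φ : ℚ⟮r⟯ →+* L, φ (AdjoinSimple.gen ℚ r) = z := by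
    intro L _ _ z hz
    have hz' : aeval z (minpoly ℚ (adjoin.powerBasis hint).gen) = 0 := by
      have h0 : minpoly ℚ (adjoin.powerBasis hint).gen = f.map (Int.castRingHom ℚ) := by
        rw [adjoin.powerBasis_gen, ← hmin]; exact minpoly_gen ℚ r
      rw [h0]
      have := aeval_map_algebraMap ℚ z f
      rw [hz] at this
      exact this
    refine ⟨((adjoin.powerBasis hint).lift z hz' : ℚ⟮r⟯ →ₐ[ℚ] L), ?_⟩
    have := (adjoin.powerBasis hint).lift_gen z hz'
    rw [adjoin.powerBasis_gen] at this
    exact this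
  have hgen : aeval (AdjoinSimple.gen ℚ r) f = 0 := by
    have := aeval_algebraMap_apply ℂ (AdjoinSimple.gen ℚ r) f
    rw [AdjoinSimple.algebraMap_gen, hr] at this
    exact (map_eq_zero _).1 this.symm
  have hfd' : FiniteDimensional ℚ ℚ⟮r⟯ := adjoin.finiteDimensional hint
  let x : 𝓞 ℚ⟮r⟯ := ⟨AdjoinSimple.gen ℚ r, f, hfm, hgen⟩
  have hσ : ∀ i, ∃ φ : ℚ⟮r⟯ →+* ℝ, φ (AdjoinSimple.gen ℚ r) = ρ i := fun i => hlift ℝ (ρ i) (hfr i)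
  choose σ hσ using hσ
  refine ⟨ℚ⟮r⟯, hfd', x, σ, ?_, hσ, ?_, ?_⟩
  · rw [adjoin.finrank hint, hmin, hfm.natDegree_map, hfd]
  · have := aeval_algebraMap_apply ℚ⟮r⟯ x f
    have h2 : algebraMap (𝓞 ℚ⟮r⟯) ℚ⟮r⟯ x = AdjoinSimple.gen ℚ r := rfl
    rw [h2, hgen] at this
    exact (FaithfulSMul.algebraMap_eq_zero_iff _ _).1 this.symm
  · intro q _ z hz
    exact hlift _ z hz

theorem aux_prod3 (d : ℕ) (F : Fin (d + 1) → ℝ) (hF : ∀ i, 0 ≤ F i) (k : Fin d) (ε R L : ℝ)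
    (hR : 1 ≤ R) (h0 : F k.castSucc ≤ ε) (h1 : ∀ i : Fin d, F i.castSucc ≤ R) (h2 : F (Fin.last d) ≤ L) :
    ∏ i, F i ≤ ε * R ^ d * L := by
  rw [Fin.prod_univ_castSucc, ← Finset.mul_prod_erase _ _ (Finset.mem_univ k)]
  have e1 : ∏ i ∈ Finset.univ.erase k, F i.castSucc ≤ R ^ d := by
    calc _ ≤ ∏ i ∈ Finset.univ.erase k, R := Finset.prod_le_prod (fun _ _ => hF _) (fun i _ => h1 i)
      _ = R ^ (d - 1) := by rw [Finset.prod_const, Finset.card_erase_of_mem (Finset.mem_univ _)]; simp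
      _ ≤ R ^ d := pow_le_pow_right₀ hR (by omega)
  have hε : 0 ≤ ε := le_trans (hF _) h0
  exact mul_le_mul (mul_le_mul h0 e1 (Finset.prod_nonneg fun _ _ => hF _) hε) h2 (hF _) (by positivity)

theorem aux_powdiff (g m : ℝ) (hg : 0 ≤ g) (hm : 1 ≤ m) (p : ℕ) (hp : 1 ≤ p) : |g - m| ≤ |g ^ p - m ^ p| := by
  obtain ⟨k, rfl⟩ : ∃ k, p = k + 1 := ⟨p - 1, by omega⟩
  have hk : 1 ≤ m ^ k := one_le_pow₀ hm
  rcases le_total g m with h | h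
  · have h1 : g ^ k ≤ m ^ k := pow_le_pow_left₀ hg h k
    rw [abs_sub_comm, abs_of_nonneg (by linarith), abs_sub_comm]
    refine le_trans ?_ (le_abs_self _)
    rw [pow_succ, pow_succ]
    nlinarith
  · have h1 : m ^ k ≤ g ^ k := pow_le_pow_left₀ (by linarith) h k
    rw [abs_of_nonneg (by linarith)]
    refine le_trans ?_ (le_abs_self _)
    rw [pow_succ, pow_succ]
    nlinarith

open NumberField in
theorem aux_notpow {K : Type*} [Field K] [NumberField K] (d : ℕ) (x : 𝓞 K)
    (σ : Fin (d + 1) → (K →+* ℝ)) (ρ : Fin (d + 1) → ℝ) (hρ : Function.Injective ρ) (hσ : ∀ i, σ i x = ρ i)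
    (hN : ∀ z : 𝓞 K, z ≠ 0 → 1 ≤ ∏ i, |σ i z|) (b : Fin (d + 1) → ℤ) (u : ℤ) (hu : 1 ≤ u)
    (S : ℝ) (hS : 1 ≤ S) (hbS : ∀ i : Fin d, |(b i.castSucc : ℝ)| ≤ S) (δ A M : ℝ) (hA1 : 1 ≤ A) (hM : M = u * (S + 1) + 1)
    (hδ1 : δ ≤ 1)
    (hδ : ∀ i, |ρ i - b i| ≤ δ) (hA : (b (Fin.last d) : ℝ) = A) (hbig : u * δ * (2 * M) ^ d * (2 * M * √A) < 1)
    (k : Fin d) (t ℓ : ℕ) (hℓ : 1 ≤ ℓ) (ht : 1 ≤ t) (hbt : u * b k.castSucc + 1 = (t : ℤ) ^ ℓ)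
    (p : ℕ) (hp : p.Prime) (hpl : p ∣ ℓ) (γ ζ : 𝓞 K) (hζ : ζ = 1 ∨ ζ = -1) (h : u * x + 1 = ζ * γ ^ p) : False := by
  have hu' : (1 : ℝ) ≤ u := by exact_mod_cast hu
  have hM1 : 2 * u + 1 ≤ M := by rw [hM]; nlinarith
  have hMM : 1 ≤ M := by linarith
  obtain ⟨l', rfl⟩ := hpl
  set m : ℝ := (t : ℝ) ^ l' with hm
  have ht' : (1 : ℝ) ≤ t := by exact_mod_cast ht
  have hm1 : 1 ≤ m := one_le_pow₀ ht'
  have hbt' : (u : ℝ) * b k.castSucc + 1 = m ^ p := by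
    rw [hm, ← pow_mul, mul_comm l' p]; exact_mod_cast hbt
  have habs : ∀ i, |σ i γ| ^ p = |u * ρ i + 1| := by
    intro i
    have := congrArg (fun z : 𝓞 K => |σ i z|) h
    simp only [map_add, map_mul, map_pow, map_one, map_intCast, abs_mul, abs_pow, hσ] at this
    rw [this]
    rcases hζ with rfl | rfl <;> simp
  obtain ⟨s, hs, hsa⟩ : ∃ s : ℤ, (s = 1 ∨ s = -1) ∧ |σ k.castSucc γ - s * m| = |(|σ k.castSucc γ|) - m| := by
    rcases le_total 0 (σ k.castSucc γ) with h0 | h0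
    · exact ⟨1, Or.inl rfl, by rw [abs_of_nonneg h0]; simp⟩
    · refine ⟨-1, Or.inr rfl, ?_⟩
      rw [abs_of_nonpos h0, ← abs_neg]
      congr 1; push_cast; ring
  have hsabs : |(s : ℝ)| = 1 := by rcases hs with rfl | rfl <;> simp
  have hp1 : 1 ≤ p := hp.one_lt.le
  let z : 𝓞 K := γ - ((s * (t : ℤ) ^ l' : ℤ) : 𝓞 K)
  have hz : ∀ i, σ i z = σ i γ - s * m := by intro i; simp [z, hm]
  have hmM : m ≤ M := by
    have h1 : m ≤ m ^ p := le_self_pow₀ hm1 (by omega)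
    have := (abs_le.1 (hbS k)).2
    rw [← hbt'] at h1
    nlinarith
  have hγ : ∀ i : Fin d, |σ i.castSucc γ| ≤ M := by
    intro i
    have h1 : |u * ρ i.castSucc + 1| ≤ M := by
      have a1 := abs_le.1 (hδ i.castSucc)
      have a2 := abs_le.1 (hbS i)
      rw [hM]
      exact abs_le.2 ⟨by nlinarith, by nlinarith⟩
    by_contra hc
    push Not at hc
    have : |σ i.castSucc γ| ≤ |σ i.castSucc γ| ^ p := le_self_pow₀ (by linarith) (by omega)
    rw [habs] at this
    linarith
  have hγl : |σ (Fin.last d) γ| ≤ M * √A := by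
    have hsA : 1 ≤ √A := Real.one_le_sqrt.2 hA1
    have h1 : |u * ρ (Fin.last d) + 1| ≤ M * A := by
      have a1 := abs_le.1 (hδ (Fin.last d))
      rw [hA] at a1
      exact abs_le.2 ⟨by nlinarith, by nlinarith⟩
    by_contra hc
    push Not at hc
    have h3 : 1 ≤ |σ (Fin.last d) γ| := by nlinarith
    have h2 : |σ (Fin.last d) γ| ^ 2 ≤ |σ (Fin.last d) γ| ^ p := pow_le_pow_right₀ h3 hp.two_le
    rw [habs] at h2
    have h4 : (M * √A) ^ 2 < |σ (Fin.last d) γ| ^ 2 := pow_lt_pow_left₀ hc (by positivity) (by norm_num)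
    rw [mul_pow, Real.sq_sqrt (by linarith)] at h4
    nlinarith
  have hdiff : ∀ i, |σ i z| ≤ |σ i γ| + m := by
    intro i
    rw [hz]
    calc _ ≤ |σ i γ| + |s * m| := abs_sub _ _
      _ = _ := by rw [abs_mul, hsabs, one_mul, abs_of_nonneg (by linarith : 0 ≤ m)]
  have hk : |σ k.castSucc z| ≤ u * δ := by
    rw [hz, hsa]
    refine (aux_powdiff _ m (abs_nonneg _) hm1 p hp1).trans ?_
    rw [habs, ← abs_of_nonneg (by positivity : 0 ≤ m ^ p)]
    refine (abs_abs_sub_abs_le_abs_sub _ _).trans ?_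
    rw [← hbt']
    have : (u : ℝ) * ρ k.castSucc + 1 - (u * b k.castSucc + 1) = u * (ρ k.castSucc - b k.castSucc) := by ring
    rw [this, abs_mul, abs_of_nonneg (by linarith : (0 : ℝ) ≤ u)]
    exact mul_le_mul_of_nonneg_left (hδ _) (by linarith)
  have hz0 : z = 0 := by
    by_contra hne
    have h1 := hN z hne
    have h2 := aux_prod3 d (fun i => |σ i z|) (fun _ => abs_nonneg _) k (u * δ) (2 * M) (2 * M * √A) (by linarith) hk
      (fun i => (hdiff _).trans (by linarith [hγ i])) ((hdiff _).trans (by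
        have hsA : 1 ≤ √A := Real.one_le_sqrt.2 hA1
        nlinarith))
    linarith
  have hc : ∀ i, u * ρ i + 1 = m ^ p ∨ u * ρ i + 1 = - m ^ p := by
    intro i
    have h1 := hz i
    rw [hz0] at h1
    simp only [map_zero] at h1
    have h2 := habs i
    have h3 : σ i γ = s * m := by linarith
    rw [h3, abs_mul, hsabs, one_mul, abs_of_nonneg (by linarith : 0 ≤ m)] at h2
    have := eq_or_eq_neg_of_abs_eq h2.symm
    exact this
  have hc2 : ∀ i j, u * ρ i + 1 = u * ρ j + 1 := by
    have : ∀ i, (u * ρ i + 1 = σ i (ζ : K) * (s * m) ^ p) := by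
      intro i
      have h0 := congrArg (fun z : 𝓞 K => σ i z) h
      simp only [map_add, map_mul, map_pow, map_one, map_intCast, hσ] at h0
      have h1 := hz i
      rw [hz0] at h1
      simp only [map_zero] at h1
      rw [h0, (by linarith : σ i γ = s * m)]
    intro i j
    rw [this, this]
    rcases hζ with rfl | rfl <;> simp
  have := hc2 k.castSucc (Fin.last d)
  have h5 : ρ k.castSucc = ρ (Fin.last d) := by
    have : (u : ℝ) * ρ k.castSucc = u * ρ (Fin.last d) := by linarith
    exact mul_left_cancel₀ (by linarith : (u : ℝ) ≠ 0) this
  exact absurd (hρ h5) (Fin.castSucc_lt_last k).ne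

open NumberField in
theorem aux_hind {K : Type*} [Field K] [NumberField K] (d : ℕ) (x : 𝓞 K) (b : Fin (d + 1) → ℤ) (u : ℤ)
    (hx : ∏ i, (x - (b i : 𝓞 K)) = u * x + 1) (hy : (u * x + 1 : 𝓞 K) ≠ 0) (p : ℕ) (hp : p.Prime)
    (hnp : ∀ γ ζ : 𝓞 K, (ζ = 1 ∨ ζ = -1) → u * x + 1 = ζ * γ ^ p → False)
    (hloc : ∀ j : Fin d, ∃ (q : ℕ) (Ψ : 𝓞 K →+* ZMod q) (g g' : ZMod q), Ψ x = 0 ∧ (-(b 0 : ZMod q)) = g ∧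
      (-(b j.succ : ZMod q)) = g' ∧ (∀ i, i ≠ 0 → i ≠ j.succ → (-(b i : ZMod q)) = 1) ∧
      ∀ e e' : ℕ, e < p → e' < p → ∀ z ζ : ZMod q, (ζ = 1 ∨ ζ = -1) → g ^ e * g' ^ e' = ζ * z ^ p → e = e')
    (e : Fin (d + 1) → ℕ) (he : ∀ i, e i < p) (γ ζ : 𝓞 K) (hζ : ζ = 1 ∨ ζ = -1)
    (h : ∏ i, (x - (b i : 𝓞 K)) ^ e i = ζ * γ ^ p) (i : Fin (d + 1)) : e i = 0 := by
  have heq : ∀ j, e j = e 0 := by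
    intro j
    rcases Fin.eq_zero_or_eq_succ j with rfl | ⟨j, rfl⟩
    · rfl
    obtain ⟨q, Ψ, g, g', hΨ, hg, hg', h1, hgg⟩ := hloc j
    refine (hgg _ _ (he 0) (he _) (Ψ γ) (Ψ ζ) (by rcases hζ with rfl | rfl <;> simp) ?_).symm
    have h2 := congrArg Ψ h
    rw [map_prod, map_mul, map_pow] at h2
    rw [← h2]
    have h3 : ∀ i, Ψ ((x - (b i : 𝓞 K)) ^ e i) = (-(b i : ZMod q)) ^ e i := by
      intro i; rw [map_pow, map_sub, hΨ, map_intCast, zero_sub]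
    simp_rw [h3]
    rw [Fin.prod_univ_succ, hg, ← hg', Finset.prod_eq_single j]
    · intro i _ hij
      rw [h1 _ (Fin.succ_ne_zero i) (by simpa using hij), one_pow]
    · intro hj; exact absurd (Finset.mem_univ _) hj
  rw [heq i]
  by_contra hne
  simp_rw [heq] at h
  rw [Finset.prod_pow, hx] at h
  set y : 𝓞 K := u * x + 1 with hydef
  have hcop : Nat.Coprime (e 0) p := (Nat.coprime_of_lt_prime hne (he 0) hp).symm
  obtain ⟨r, -, hr⟩ := Nat.exists_mul_mod_eq_one_of_coprime hcop hp.one_lt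
  obtain ⟨s, hs⟩ : ∃ s, e 0 * r = 1 + p * s := ⟨e 0 * r / p, by have := Nat.mod_add_div (e 0 * r) p; rw [hr] at this; exact this.symm⟩
  have hK : (y : K) * ((y : K) ^ s) ^ p = (ζ : K) ^ r * ((γ : K) ^ r) ^ p := by
    have h1 : y * (y ^ s) ^ p = ζ ^ r * (γ ^ r) ^ p := by
      calc y * (y ^ s) ^ p = (y ^ (e 0)) ^ r := by rw [← pow_mul, ← pow_mul, hs, pow_add, pow_one, mul_comm s p]
        _ = _ := by rw [h, mul_pow, ← pow_mul, ← pow_mul, mul_comm]; rw [mul_comm r p]; ring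
    exact_mod_cast congrArg (fun z : 𝓞 K => (z : K)) h1
  have hyK : (y : K) ≠ 0 := fun h0 => hy (by exact_mod_cast h0)
  have hζr : ζ ^ r = 1 ∨ ζ ^ r = -1 := by
    rcases hζ with rfl | rfl
    · simp
    · exact neg_one_pow_eq_or _ _
  let c : K := (γ : K) ^ r / (y : K) ^ s
  have hc : (y : K) = ((ζ ^ r : 𝓞 K) : K) * c ^ p := by
    simp only [c, div_pow, map_pow]
    field_simp
    exact hK
  have hcint : IsIntegral ℤ c := by
    refine IsIntegral.of_pow hp.pos (n := p) ?_
    have : c ^ p = ((ζ ^ r * y : 𝓞 K) : K) := by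
      rcases hζr with h | h <;> rw [h] at hc ⊢
      · rw [one_mul, hc]; simp
      · rw [neg_one_mul]
        have e1 : c ^ p = -(y : K) := by rw [hc]; simp
        rw [e1]; exact (map_neg (algebraMap (𝓞 K) K) y).symm
    rw [this]; exact RingOfIntegers.isIntegral_coe _
  refine hnp ⟨c, hcint⟩ (ζ ^ r) hζr ?_
  apply RingOfIntegers.ext
  rw [hc]; simp
  left; rfl

open Polynomial in
theorem aux_localpoly (d : ℕ) (b : Fin (d + 1) → ℤ) (u : ℤ) (f : ℤ[X])
    (hf : f = ∏ i, (X - C (b i)) - (C u * X + 1)) (q : ℕ) [Fact q.Prime] (hq : (q : ℤ) ∣ u) (g : ZMod q) (hg : g ≠ 0)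
    (hg2 : g ^ 2 + ((d : ZMod q) - 1) * g + 1 ≠ 0) (j : Fin d) (h0 : (-(b 0 : ZMod q)) = g)
    (hj : (-(b j.succ : ZMod q)) = g⁻¹) (hi : ∀ i, i ≠ 0 → i ≠ j.succ → (-(b i : ZMod q)) = 1) :
    (q : ℤ) ∣ f.eval 0 ∧ ¬ (q : ℤ) ∣ f.derivative.eval 0 := by
  have hu : (u : ZMod q) = 0 := (ZMod.intCast_zmod_eq_zero_iff_dvd u q).2 hq
  let c : Fin (d + 1) → ZMod q := fun i => -(b i : ZMod q)
  have hc1 : ∀ i : Fin d, i ≠ j → c i.succ = 1 := fun i hij => hi _ (Fin.succ_ne_zero i) (by simpa using hij)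
  have hprod : ∏ i, c i = 1 := by
    rw [Fin.prod_univ_succ, Finset.prod_eq_single j (fun i _ hij => hc1 i hij) (fun h => absurd (Finset.mem_univ _) h)]
    simp only [c, h0, hj]
    exact mul_inv_cancel₀ hg
  constructor
  · rw [← ZMod.intCast_zmod_eq_zero_iff_dvd, hf]
    simp only [eval_sub, eval_prod, eval_X, eval_C, eval_add, eval_mul, eval_one]
    push_cast
    simp only [zero_sub]
    have : ∏ i, (-(b i : ZMod q)) = 1 := hprod
    rw [this]; simp
  · rw [← ZMod.intCast_zmod_eq_zero_iff_dvd, hf]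
    simp only [derivative_sub, derivative_prod_finset, eval_sub, eval_finsetSum, eval_mul, eval_prod, eval_X, eval_C, derivative_X, derivative_C, derivative_add, derivative_mul, eval_add, eval_one, derivative_one, eval_zero]
    push_cast
    simp only [hu, zero_sub, sub_zero, mul_one, add_zero]
    have hinv : ∀ i, ∏ k ∈ Finset.univ.erase i, (-(b k : ZMod q)) = (c i)⁻¹ := by
      intro i
      have h1 : c i * ∏ k ∈ Finset.univ.erase i, c k = 1 := by rw [Finset.mul_prod_erase _ _ (Finset.mem_univ i), hprod]
      exact eq_inv_of_mul_eq_one_right h1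
    simp only [hinv]
    have hs : ∑ i, (c i)⁻¹ = g⁻¹ * (g ^ 2 + ((d : ZMod q) - 1) * g + 1) := by
      rw [Fin.sum_univ_succ, ← Finset.add_sum_erase _ _ (Finset.mem_univ j),
        Finset.sum_congr rfl (g := fun _ => (1 : ZMod q)) (fun i hi => by rw [hc1 i (Finset.ne_of_mem_erase hi), inv_one])]
      rw [Finset.sum_const, Finset.card_erase_of_mem (Finset.mem_univ _)]
      simp only [c, h0, hj, inv_inv, Finset.card_univ, Fintype.card_fin, nsmul_eq_mul, mul_one]
      have : 1 ≤ d := by have := j.2; omega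
      rw [Nat.cast_sub this]
      field_simp
      push_cast; ring
    rw [hs]
    simpa using ⟨hg, hg2⟩


theorem aux_res (d ℓ : ℕ) (hd : 2 ≤ d) (hℓ : 1 ≤ ℓ) : ∃ (u : ℕ) (T : Fin (d + 1) → ℕ), 2 ≤ u ∧ (∀ i, T i < u) ∧
    ∀ j : Fin d, ∃ (q : ℕ) (_ : Fact q.Prime) (g : ZMod q), q ∣ u ∧ g ≠ 0 ∧
      g ^ 2 + ((d : ZMod q) - 1) * g + 1 ≠ 0 ∧ (-((ℓ * T 0 : ℕ) : ZMod q)) = g ∧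
      (-((ℓ * T j.succ : ℕ) : ZMod q)) = g⁻¹ ∧ (∀ i, i ≠ 0 → i ≠ j.succ → (-((ℓ * T i : ℕ) : ZMod q)) = 1) ∧
      ∀ p : ℕ, p.Prime → p ∣ ℓ → ∀ e e' : ℕ, e < p → e' < p → ∀ z ζ : ZMod q, (ζ = 1 ∨ ζ = -1) →
        g ^ e * g⁻¹ ^ e' = ζ * z ^ p → e = e' := by
  have hinf : {q : ℕ | q.Prime ∧ q ≡ 1 [MOD 2 * ℓ] ∧ ℓ + 3 < q}.Infinite := by
    refine Set.infinite_of_forall_exists_gt fun a => ?_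
    obtain ⟨q, h1, h2, h3⟩ := Nat.forall_exists_prime_gt_and_modEq (q := 2 * ℓ) (a := 1) (a + ℓ + 3) (by omega) (by simp)
    exact ⟨q, ⟨h2, h3, by omega⟩, by omega⟩
  let Q := hinf.natEmbedding
  let q : Fin d → ℕ := fun j => Q j
  have hqp : ∀ j, (q j).Prime := fun j => (Q j).2.1
  have hq1 : ∀ j, q j ≡ 1 [MOD 2 * ℓ] := fun j => (Q j).2.2.1
  have hq2 : ∀ j, ℓ + 3 < q j := fun j => (Q j).2.2.2
  have hqi : Function.Injective q := by
    intro i j h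
    exact Fin.ext (Q.injective (Subtype.ext h))
  have : ∀ j, Fact (q j).Prime := fun j => ⟨hqp j⟩
  have hg : ∀ j, ∃ g : ZMod (q j), g ≠ 0 ∧ g ^ 2 + ((d : ZMod (q j)) - 1) * g + 1 ≠ 0 ∧
      ∀ p : ℕ, p.Prime → p ∣ ℓ → ∀ e e' : ℕ, e < p → e' < p → ∀ z ζ : ZMod (q j), (ζ = 1 ∨ ζ = -1) →
        g ^ e * g⁻¹ ^ e' = ζ * z ^ p → e = e' := fun j =>
    aux_gen (q j) ℓ hℓ ((Nat.modEq_iff_dvd' (by have := hq2 j; omega)).1 (hq1 j).symm) (hq2 j) _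
  choose g hg0 hg2 hgp using hg
  let r : ∀ j : Fin d, Fin (d + 1) → ZMod (q j) := fun j i => if i = 0 then g j else if i = j.succ then (g j)⁻¹ else 1
  have hl : ∀ j, (ℓ : ZMod (q j)) ≠ 0 := by
    intro j h
    rw [ZMod.natCast_eq_zero_iff] at h
    have := Nat.le_of_dvd (by omega) h
    have := hq2 j
    omega
  have hcop : Set.Pairwise (↑(Finset.univ : Finset (Fin d))) (Function.onFun Nat.Coprime q) := by
    intro i _ j _ hij
    exact (Nat.coprime_primes (hqp i) (hqp j)).2 (hqi.ne hij)
  let T : Fin (d + 1) → ℕ := fun i => Nat.chineseRemainderOfFinset (fun j => (-(r j i) / (ℓ : ZMod (q j))).val) q Finset.univ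
    (fun j _ => (hqp j).ne_zero) hcop
  have hT : ∀ i j, (T i : ZMod (q j)) = -(r j i) / (ℓ : ZMod (q j)) := by
    intro i j
    have := (Nat.chineseRemainderOfFinset (fun j => (-(r j i) / (ℓ : ZMod (q j))).val) q Finset.univ
      (fun j _ => (hqp j).ne_zero) hcop).2 j (Finset.mem_univ j)
    rw [← ZMod.natCast_eq_natCast_iff] at this
    rw [ZMod.natCast_zmod_val] at this
    exact this
  have hTr : ∀ i j, (-((ℓ * T i : ℕ) : ZMod (q j))) = r j i := by
    intro i j
    push_cast
    rw [hT]
    have := hl j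
    field_simp
  refine ⟨∏ j, q j, T, ?_, ?_, fun j => ⟨q j, inferInstance, g j, Finset.dvd_prod_of_mem _ (Finset.mem_univ j), hg0 j, hg2 j, ?_, ?_, ?_, hgp j⟩⟩
  · have h0 : q ⟨0, by omega⟩ ∣ ∏ j, q j := Finset.dvd_prod_of_mem _ (Finset.mem_univ _)
    have h1 : 0 < ∏ j, q j := Finset.prod_pos fun j _ => (hqp j).pos
    exact (hqp _).two_le.trans (Nat.le_of_dvd h1 h0)
  · intro i
    exact Nat.chineseRemainderOfFinset_lt_prod _ _ _ _
  · rw [hTr]; simp [r]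
  · rw [hTr]; simp [r, Fin.succ_ne_zero]
  · intro i h1 h2
    rw [hTr]; simp [r, h1, h2]

theorem aux_b (u τ ℓ : ℕ) : ∃ a : ℤ, (u : ℤ) * a + 1 = ((1 + u * τ : ℕ) : ℤ) ^ ℓ ∧ (u : ℤ) ∣ a - (ℓ * τ : ℕ) := by
  induction ℓ with
  | zero => exact ⟨0, by simp, by simp⟩
  | succ k ih =>
    obtain ⟨a, h1, h2⟩ := ih
    refine ⟨a + τ + u * a * τ, ?_, ?_⟩
    · rw [pow_succ, ← h1]; push_cast; ring
    · obtain ⟨c, hc⟩ := h2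
      refine ⟨c + a * τ, ?_⟩
      push_cast at hc ⊢
      linear_combination hc

theorem aux_param (d ℓ : ℕ) (hd : 2 ≤ d) (hℓ : 1 ≤ ℓ) : ∃ (u : ℤ) (b0 : Fin d → ℤ) (w0 N : ℕ),
    1 ≤ u ∧ Function.Injective b0 ∧ 0 < N ∧ ∀ k : ℕ, ∃ (b : Fin (d + 1) → ℤ) (t : Fin (d + 1) → ℕ),
      (∀ i : Fin d, b i.castSucc = b0 i) ∧ t (Fin.last d) = w0 + k * N ∧ (∀ i, 1 ≤ t i) ∧ (∀ i, u * b i + 1 = (t i : ℤ) ^ ℓ) ∧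
    (∀ i, IsCoprime (t i : ℤ) (∏ j ∈ Finset.univ.erase i, (b i - b j) - u)) ∧
    (∀ j : Fin d, ∃ (q : ℕ) (_ : Fact q.Prime) (g : ZMod q), (q : ℤ) ∣ u ∧ g ≠ 0 ∧
      g ^ 2 + ((d : ZMod q) - 1) * g + 1 ≠ 0 ∧ (-(b 0 : ZMod q)) = g ∧
      (-(b j.succ : ZMod q)) = g⁻¹ ∧ (∀ i, i ≠ 0 → i ≠ j.succ → (-(b i : ZMod q)) = 1) ∧
      ∀ p : ℕ, p.Prime → p ∣ ℓ → ∀ e e' : ℕ, e < p → e' < p → ∀ z ζ : ZMod q, (ζ = 1 ∨ ζ = -1) →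
        g ^ e * g⁻¹ ^ e' = ζ * z ^ p → e = e') := by
  obtain ⟨u, T, hu, hT, hloc⟩ := aux_res d ℓ hd hℓ
  let τ : Fin d → ℕ := fun i => T i.castSucc + u * i
  have hτ : Function.Injective τ := by
    intro i j h
    have h1 : τ i / u = i := by
      simp only [τ]
      rw [Nat.add_mul_div_left _ _ (by omega), Nat.div_eq_of_lt (hT _), zero_add]
    have h2 : τ j / u = j := by
      simp only [τ]
      rw [Nat.add_mul_div_left _ _ (by omega), Nat.div_eq_of_lt (hT _), zero_add]
    exact Fin.ext (by rw [← h1, ← h2, h])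
  choose b0 hb0 hb0m using fun i => aux_b u (τ i) ℓ
  let t0 : Fin d → ℕ := fun i => 1 + u * τ i
  have hinj : Function.Injective b0 := by
    intro i j h
    have h1 := hb0 i
    rw [h, hb0 j] at h1
    have h2 : (1 + u * τ j) ^ ℓ = (1 + u * τ i) ^ ℓ := by exact_mod_cast h1
    have h3 := Nat.pow_left_injective (by omega : ℓ ≠ 0) h2
    have h4 : u * τ j = u * τ i := by simpa using h3
    exact (hτ (Nat.eq_of_mul_eq_mul_left (by omega) h4)).symm
  have hcu : ∀ s : ℕ, IsCoprime ((1 + u * s : ℕ) : ℤ) (u : ℤ) := by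
    intro s; exact ⟨1, -s, by push_cast; ring⟩
  let Pi : ℕ := ∏ j, t0 j
  let B : ℤ := ∏ j, (-((t0 j : ℤ)) ^ ℓ) - (u : ℤ) ^ (d + 1)
  have htB : ∀ j, IsCoprime (t0 j : ℤ) B := by
    intro j
    have h1 : (t0 j : ℤ) ∣ ∏ j, (-((t0 j : ℤ)) ^ ℓ) :=
      (Dvd.dvd.neg_right (dvd_pow_self _ (by omega))).trans (Finset.dvd_prod_of_mem (fun j => -((t0 j : ℤ)) ^ ℓ) (Finset.mem_univ j))
    obtain ⟨c, hc⟩ := h1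
    have h2 : IsCoprime (t0 j : ℤ) (-(u : ℤ) ^ (d + 1)) := ((hcu (τ j)).pow_right).neg_right
    have h3 : B = -(u : ℤ) ^ (d + 1) + (t0 j : ℤ) * c := by simp only [B]; rw [hc]; ring
    rw [h3]
    exact h2.add_mul_left_right c
  have hPB : IsCoprime (Pi : ℤ) B := by
    simp only [Pi]; push_cast
    exact IsCoprime.prod_left fun j _ => htB j
  have hPu : IsCoprime (Pi : ℤ) (u : ℤ) := by
    simp only [Pi]; push_cast
    exact IsCoprime.prod_left fun j _ => hcu (τ j)
  have hBu : IsCoprime B (u : ℤ) := by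
    have h2 : IsCoprime (∏ j, (-((t0 j : ℤ)) ^ ℓ)) (u : ℤ) :=
      IsCoprime.prod_left fun j _ => ((hcu (τ j)).pow_left).neg_left
    have h3 : B = ∏ j, (-((t0 j : ℤ)) ^ ℓ) + (u : ℤ) * (-(u : ℤ) ^ d) := by simp only [B]; ring
    rw [h3]
    exact h2.add_mul_left_left _
  have hB0 : B ≠ 0 := by
    intro h
    rw [h, isCoprime_zero_left, Int.isUnit_iff] at hBu
    omega
  have hPpos : 0 < Pi := Finset.prod_pos fun j _ => by simp only [t0]; omega
  have c1 : Nat.Coprime Pi B.natAbs := by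
    have := Int.isCoprime_iff_gcd_eq_one.1 hPB
    simpa [Int.gcd] using this
  have c2 : Nat.Coprime (Pi * B.natAbs) (u ^ 2) := by
    refine Nat.Coprime.pow_right 2 (Nat.Coprime.mul_left ?_ ?_)
    · have := Int.isCoprime_iff_gcd_eq_one.1 hPu
      simpa [Int.gcd] using this
    · have := Int.isCoprime_iff_gcd_eq_one.1 hBu
      simpa [Int.gcd] using this
  obtain ⟨v, hv1, hv2⟩ := Nat.chineseRemainder c1 0 1
  obtain ⟨w, hw1, hw2⟩ := Nat.chineseRemainder c2 v (1 + u * T (Fin.last d))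
  set N := Pi * B.natAbs * u ^ 2 with hN
  have hNpos : 0 < N := by have := Int.natAbs_pos.2 hB0; positivity
  refine ⟨u, b0, w + (1 + u * T (Fin.last d)) * N, N, by omega, hinj, hNpos, fun k => ?_⟩
  obtain ⟨W, hW⟩ : ∃ W, W = w + (1 + u * T (Fin.last d)) * N + k * N := ⟨_, rfl⟩
  have hWw : W = w + N * ((1 + u * T (Fin.last d)) + k) := by rw [hW]; ring
  have hW1 : Pi ∣ W := by
    rw [hWw]
    refine dvd_add ?_ (Dvd.dvd.mul_right ⟨B.natAbs * u ^ 2, by rw [hN]; ring⟩ _)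
    have : w ≡ 0 [MOD Pi] := (hw1.of_mul_right _).trans hv1
    exact (Nat.modEq_zero_iff_dvd).1 this
  have hW2 : IsCoprime (W : ℤ) B := by
    have h1 : w ≡ 1 [MOD B.natAbs] := (hw1.of_mul_left _).trans hv2
    have h2 : B ∣ (1 - (w : ℤ)) := by
      have := (Nat.modEq_iff_dvd.1 h1)
      exact Int.natAbs_dvd.1 (by exact_mod_cast this)
    have h3 : B ∣ (N : ℤ) := by
      rw [← Int.natAbs_dvd]
      exact_mod_cast (⟨Pi * u ^ 2, by rw [hN]; ring⟩ : B.natAbs ∣ N)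
    obtain ⟨c, hc⟩ := h2
    obtain ⟨c', hc'⟩ := h3
    refine ⟨1, c - c' * ((1 + u * T (Fin.last d)) + k), ?_⟩
    rw [hWw]; push_cast
    rw [hc']
    linear_combination -hc
  obtain ⟨s, hs⟩ : ∃ s, W = 1 + u * (T (Fin.last d) + u * s) := by
    have h1 : 1 + u * T (Fin.last d) ≡ W [MOD u ^ 2] := by
      rw [hWw]
      refine hw2.symm.trans ?_
      have : w + 0 ≡ w + N * ((1 + u * T (Fin.last d)) + k) [MOD u ^ 2] :=
        Nat.ModEq.add_left _ ((Nat.modEq_zero_iff_dvd.2 (Dvd.dvd.mul_right ⟨Pi * B.natAbs, by rw [hN]; ring⟩ _)).symm)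
      simpa using this
    have hle : 1 + u * T (Fin.last d) ≤ W := by
      rw [hW]
      have := Nat.le_mul_of_pos_right (1 + u * T (Fin.last d)) hNpos
      omega
    obtain ⟨s, hs⟩ := (Nat.modEq_iff_dvd' hle).1 h1
    exact ⟨s, by rw [← Nat.sub_add_cancel hle, hs]; ring⟩
  obtain ⟨a, ha, ham⟩ := aux_b u (T (Fin.last d) + u * s) ℓ
  rw [← hs] at ha
  let b : Fin (d + 1) → ℤ := Fin.snoc (α := fun _ => ℤ) b0 a
  let t : Fin (d + 1) → ℕ := Fin.snoc (α := fun _ => ℕ) t0 W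
  have hbc : ∀ i : Fin d, b i.castSucc = b0 i := fun i => by simp [b]
  have hbl : b (Fin.last d) = a := by simp [b]
  have htc : ∀ i : Fin d, t i.castSucc = t0 i := fun i => by simp [t]
  have htl : t (Fin.last d) = W := by simp [t]
  have hbt : ∀ i, (u : ℤ) * b i + 1 = (t i : ℤ) ^ ℓ := by
    intro i
    rcases Fin.eq_castSucc_or_eq_last i with ⟨i, rfl⟩ | rfl
    · rw [hbc, htc]; exact hb0 i
    · rw [hbl, htl]; exact ha
  have hbm : ∀ i, (u : ℤ) ∣ b i - (ℓ * T i : ℕ) := by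
    intro i
    rcases Fin.eq_castSucc_or_eq_last i with ⟨i, rfl⟩ | rfl
    · rw [hbc]
      obtain ⟨c, hc⟩ := hb0m i
      refine ⟨c + ℓ * i, ?_⟩
      simp only [τ] at hc
      push_cast at hc ⊢
      linear_combination hc
    · rw [hbl]
      obtain ⟨c, hc⟩ := ham
      refine ⟨c + ℓ * s, ?_⟩
      push_cast at hc ⊢
      linear_combination hc
  refine ⟨b, t, hbc, by rw [htl, hW], ?_, hbt, ?_, ?_⟩
  · intro i
    rcases Fin.eq_castSucc_or_eq_last i with ⟨i, rfl⟩ | rfl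
    · rw [htc]; simp only [t0]; omega
    · rw [htl]; omega
  · intro i
    have hD : (u : ℤ) ^ d * (∏ j ∈ Finset.univ.erase i, (b i - b j) - u) =
        ∏ j ∈ Finset.univ.erase i, ((t i : ℤ) ^ ℓ - (t j : ℤ) ^ ℓ) - (u : ℤ) ^ (d + 1) := by
      have h1 : ∀ j, (t i : ℤ) ^ ℓ - (t j : ℤ) ^ ℓ = u * (b i - b j) := by
        intro j; rw [← hbt, ← hbt]; ring
      simp_rw [h1]
      rw [Finset.prod_mul_distrib, Finset.prod_const, Finset.card_erase_of_mem (Finset.mem_univ _)]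
      simp only [Finset.card_univ, Fintype.card_fin, Nat.add_sub_cancel]
      ring
    refine IsCoprime.of_mul_right_right (y := (u : ℤ) ^ d) ?_
    rw [hD]
    rcases Fin.eq_castSucc_or_eq_last i with ⟨i, rfl⟩ | rfl
    · have h1 : (t i.castSucc : ℤ) ∣ ∏ j ∈ Finset.univ.erase i.castSucc, ((t i.castSucc : ℤ) ^ ℓ - (t j : ℤ) ^ ℓ) := by
        refine Dvd.dvd.trans ?_ (Finset.dvd_prod_of_mem (fun j => (t i.castSucc : ℤ) ^ ℓ - (t j : ℤ) ^ ℓ)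
          (Finset.mem_erase.2 ⟨(Fin.castSucc_lt_last i).ne', Finset.mem_univ (Fin.last d)⟩))
        refine dvd_sub (dvd_pow_self _ (by omega)) (Dvd.dvd.trans ?_ (dvd_pow_self _ (by omega)))
        rw [htc, htl]
        exact_mod_cast (Finset.dvd_prod_of_mem t0 (Finset.mem_univ i)).trans hW1
      obtain ⟨c, hc⟩ := h1
      rw [hc]
      have h2 : IsCoprime (t i.castSucc : ℤ) (-(u : ℤ) ^ (d + 1)) := by
        rw [htc]; exact ((hcu (τ i)).pow_right).neg_right
      have h3 := h2.add_mul_left_right c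
      rw [neg_add_eq_sub] at h3
      exact h3
    · have h1 : (W : ℤ) ∣ ∏ j ∈ Finset.univ.erase (Fin.last d), ((t (Fin.last d) : ℤ) ^ ℓ - (t j : ℤ) ^ ℓ) - ∏ j, (-((t0 j : ℤ)) ^ ℓ) := by
        have h2 : ∏ j ∈ Finset.univ.erase (Fin.last d), ((t (Fin.last d) : ℤ) ^ ℓ - (t j : ℤ) ^ ℓ) =
            ∏ j : Fin d, ((W : ℤ) ^ ℓ - (t0 j : ℤ) ^ ℓ) := by
          have : (Finset.univ.erase (Fin.last d)) = Finset.univ.map Fin.castSuccEmb := by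
            ext j
            rcases Fin.eq_castSucc_or_eq_last j with ⟨j, rfl⟩ | rfl
            · simp [(Fin.castSucc_lt_last j).ne]
            · simp [(Fin.castSucc_lt_last _).ne]
          rw [this, Finset.prod_map]
          simp [htc, htl]
        rw [h2, ← ZMod.intCast_zmod_eq_zero_iff_dvd]
        push_cast
        simp [zero_pow (by omega : ℓ ≠ 0)]
      obtain ⟨c, hc⟩ := h1
      have h2 := hW2.add_mul_left_right c
      rw [← hc] at h2
      have h3 : ∀ P : ℤ, B + (P - ∏ j, (-((t0 j : ℤ)) ^ ℓ)) = P - (u : ℤ) ^ (d + 1) := fun P => by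
        simp only [B]; ring
      rw [h3, ← htl] at h2
      exact h2
  · intro j
    obtain ⟨q, hq, g, hqu, hg, hg2, h0, hj, hi, hgp⟩ := hloc j
    have hb' : ∀ i, (b i : ZMod q) = ((ℓ * T i : ℕ) : ZMod q) := by
      intro i
      have h1 : (q : ℤ) ∣ b i - (ℓ * T i : ℕ) := (by exact_mod_cast hqu : (q : ℤ) ∣ (u : ℤ)).trans (hbm i)
      rw [← ZMod.intCast_zmod_eq_zero_iff_dvd] at h1
      rw [Int.cast_sub, sub_eq_zero, Int.cast_natCast] at h1
      exact h1
    refine ⟨q, hq, g, by exact_mod_cast hqu, hg, hg2, ?_, ?_, ?_, hgp⟩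
    · rw [hb']; exact h0
    · rw [hb']; exact hj
    · intro i h1 h2; rw [hb']; exact hi i h1 h2

open NumberField Polynomial in
theorem aux_main (d ℓ : ℕ) (hd : 2 ≤ d) (hℓ : 1 ≤ ℓ) (u : ℤ) (hu : 1 ≤ u) (b : Fin (d + 1) → ℤ)
    (hb : Function.Injective b) (t : Fin (d + 1) → ℕ) (ht : ∀ i, 1 ≤ t i) (hbt : ∀ i, u * b i + 1 = (t i : ℤ) ^ ℓ)
    (hc : ∀ i, IsCoprime (t i : ℤ) (∏ j ∈ Finset.univ.erase i, (b i - b j) - u))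
    (hloc : ∀ j : Fin d, ∃ (q : ℕ) (_ : Fact q.Prime) (g : ZMod q), (q : ℤ) ∣ u ∧ g ≠ 0 ∧
      g ^ 2 + ((d : ZMod q) - 1) * g + 1 ≠ 0 ∧ (-(b 0 : ZMod q)) = g ∧
      (-(b j.succ : ZMod q)) = g⁻¹ ∧ (∀ i, i ≠ 0 → i ≠ j.succ → (-(b i : ZMod q)) = 1) ∧
      ∀ p : ℕ, p.Prime → p ∣ ℓ → ∀ e e' : ℕ, e < p → e' < p → ∀ z ζ : ZMod q, (ζ = 1 ∨ ζ = -1) →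
        g ^ e * g⁻¹ ^ e' = ζ * z ^ p → e = e')
    (S : ℝ) (hS : 1 ≤ S) (hbS : ∀ i : Fin d, |(b i.castSucc : ℝ)| ≤ S) (A M C : ℝ)
    (hAb : (b (Fin.last d) : ℝ) = A) (hM : M = u * (S + 1) + 1) (hC : C = 2 ^ d * 4 * (u * (S + 1) + 1))
    (hA1 : 4 * C ≤ A) (hA2 : C / A * (2 * S + 1) ^ d < 1) (hA3 : u * (C / A) * (2 * M) ^ d * (2 * M * √A) < 1) :
    ∃ (K : IntermediateField ℚ ℂ) (_ : FiniteDimensional ℚ K) (x : 𝓞 K) (σ : Fin (d + 1) → (K →+* ℝ)),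
      Module.finrank ℚ K = d + 1 ∧ (∀ i, |σ i x - b i| ≤ C / A) ∧
      Function.Bijective σ ∧
      (∀ z : 𝓞 K, z ≠ 0 → 1 ≤ ∏ i, |σ i z|) ∧
      (|(discr K : ℝ)| ≤ ((2 * A) * (2 * S + 1) ^ d) ^ (2 * d)) ∧
      (∃ c : ClassGroup (𝓞 K), orderOf c = ℓ) := by
  have hu' : (1 : ℝ) ≤ u := by exact_mod_cast hu
  have h2d : (1 : ℝ) ≤ 2 ^ d := one_le_pow₀ (by norm_num)
  have hMS : S + 2 ≤ M := by rw [hM]; nlinarith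
  have hCM : 4 * M ≤ C := by rw [hC, ← hM]; nlinarith
  have hApos : 0 < A := by linarith
  have hδ : C / A ≤ 1 / 4 := by rw [div_le_iff₀ hApos]; linarith
  obtain ⟨ρ, hρ⟩ := aux_roots d hd b hb S hS u hu hbS C hC (by rw [hAb]; exact hA1)
  rw [hAb] at hρ
  have hρb := fun i => (hρ i).1
  have hρr := fun i => (hρ i).2
  have hρinj : Function.Injective ρ := by
    intro i j hij
    by_contra hne
    have h1 : (1 : ℝ) ≤ |(b i : ℝ) - b j| := by
      have : b i - b j ≠ 0 := sub_ne_zero.2 fun h => hne (hb h)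
      exact_mod_cast Int.one_le_abs this
    have a1 := abs_le.1 (hρb i)
    have a2 := abs_le.1 (hρb j)
    rw [hij] at a1
    have : |(b i : ℝ) - b j| ≤ 1 / 2 := abs_le.2 ⟨by linarith, by linarith⟩
    linarith
  obtain ⟨f, hf⟩ : ∃ f : ℤ[X], f = ∏ i, (X - Polynomial.C (b i)) - (Polynomial.C u * X + 1) := ⟨_, rfl⟩
  obtain ⟨hfm, hfd, hfp⟩ := aux_factor d b u f hf hd ρ hρinj hρr
  have hirr := aux_irred d b u f hf ρ hρinj hfm hfd hfp S (C / A) hS (by linarith) hA2 hbS hρb (fun i => by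
    rw [hbt]; exact pow_ne_zero _ (by have := ht i; positivity))
  obtain ⟨K, hK, x, σ, hfin, hσ, hxf, hlift⟩ := aux_field (d + 1) f ρ 0 hfm hfd hfp hirr
  obtain ⟨hN, hdisc, hbij⟩ := aux_emb (d + 1) hfin x σ ρ hρinj hσ
  have hx : ∏ i, (x - (b i : 𝓞 K)) = u * x + 1 := by
    rw [hf] at hxf
    simp only [map_sub, map_prod, aeval_X, map_add, map_mul, map_one, aeval_C] at hxf
    exact sub_eq_zero.1 hxf
  refine ⟨K, hK, x, σ, hfin, fun i => by rw [hσ]; exact hρb i, hbij, hN, ?_, ?_⟩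
  · refine hdisc.trans ?_
    rw [pow_mul' _ 2 d]
    refine pow_le_pow_left₀ (Finset.prod_nonneg fun _ _ => Finset.prod_nonneg fun _ _ => abs_nonneg _) ?_ 2
    set R := 2 * S + 1 with hR
    have hR1 : 1 ≤ R := by linarith
    have hbnd : ∀ i : Fin (d + 1), |ρ i| ≤ A + 1 / 4 := by
      intro i
      have a1 := abs_le.1 (hρb i)
      rcases Fin.eq_castSucc_or_eq_last i with ⟨j, rfl⟩ | rfl
      · have a2 := abs_le.1 (hbS j)
        exact abs_le.2 ⟨by linarith, by linarith⟩
      · rw [hAb] at a1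
        exact abs_le.2 ⟨by linarith, by linarith⟩
    rw [Fin.prod_univ_castSucc]
    have hlast : ∏ j ∈ Finset.Ioi (Fin.last d), |ρ j - ρ (Fin.last d)| = 1 := by
      rw [Finset.prod_eq_one]
      intro j hj
      exact absurd (Finset.mem_Ioi.1 hj) (not_lt.2 (Fin.le_last j))
    rw [hlast, mul_one]
    calc _ ≤ ∏ i : Fin d, (2 * A * R ^ d) := ?_
      _ = _ := by simp
    refine Finset.prod_le_prod (fun _ _ => Finset.prod_nonneg fun _ _ => abs_nonneg _) fun i _ => ?_
    have hmem : Fin.last d ∈ Finset.Ioi i.castSucc := Finset.mem_Ioi.2 (Fin.castSucc_lt_last i)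
    rw [← Finset.mul_prod_erase _ _ hmem]
    refine mul_le_mul ?_ ?_ (Finset.prod_nonneg fun _ _ => abs_nonneg _) (by positivity)
    · have a1 := abs_le.1 (hρb (Fin.last d))
      have a2 := abs_le.1 (hρb i.castSucc)
      have a3 := abs_le.1 (hbS i)
      rw [hAb] at a1
      exact abs_le.2 ⟨by linarith, by linarith⟩
    · calc _ ≤ ∏ j ∈ (Finset.Ioi i.castSucc).erase (Fin.last d), R := by
            refine Finset.prod_le_prod (fun _ _ => abs_nonneg _) fun j hj => ?_
            rcases Fin.eq_castSucc_or_eq_last j with ⟨j, rfl⟩ | rfl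
            · have a1 := abs_le.1 (hρb j.castSucc)
              have a2 := abs_le.1 (hρb i.castSucc)
              have a3 := abs_le.1 (hbS i)
              have a4 := abs_le.1 (hbS j)
              exact abs_le.2 ⟨by linarith, by linarith⟩
            · exact absurd rfl (Finset.ne_of_mem_erase hj)
        _ = R ^ ((Finset.Ioi i.castSucc).erase (Fin.last d)).card := by rw [Finset.prod_const]
        _ ≤ R ^ d := by
            refine pow_le_pow_right₀ hR1 ?_
            rw [Finset.card_erase_of_mem hmem]
            have := Finset.card_le_univ (Finset.Ioi i.castSucc)
            simp only [Fintype.card_fin] at this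
            omega
  · have hn0 : Fin.castSucc (⟨0, by omega⟩ : Fin d) ≠ Fin.last d := (Fin.castSucc_lt_last _).ne
    refine aux_class (σ 0) (d + 1) ℓ hℓ hfin.le (fun i => x - (b i : 𝓞 K)) ?_ ?_ ?_
    · intro i h0
      have h1 : σ i (x - (b i : 𝓞 K) : 𝓞 K) = 0 := by rw [h0]; simp
      have h2 := hρr i
      rw [Finset.prod_eq_zero (Finset.mem_univ i)] at h2
      · have h3 := hρb i
        simp only [map_sub, map_intCast, hσ] at h1
        have h4 : ρ i = b i := by linarith
        rw [h4] at h2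
        have : u * b i + 1 = 0 := by exact_mod_cast h2.symm
        rw [hbt] at this
        exact pow_ne_zero _ (by have := ht i; positivity) this
      · simpa [hσ] using h1
    · intro i
      exact aux_ideal (d + 1) ℓ b (fun i => (t i : ℤ)) u x hx hbt hc i
    · intro p hp hpl e he γ ζ hζ h
      refine aux_hind d x b u hx ?_ p hp ?_ ?_ e he γ ζ hζ h
      · intro h0
        have : ∀ i, u * ρ i + 1 = 0 := by
          intro i
          have := congrArg (fun z : 𝓞 K => σ i z) h0
          simpa [hσ] using this
        have h1 := this (Fin.castSucc ⟨0, by omega⟩)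
        have h2 := this (Fin.last d)
        exact hn0 (hρinj (mul_left_cancel₀ (by linarith : (u : ℝ) ≠ 0) (by linarith)))
      · intro γ ζ hζ h
        exact aux_notpow d x σ ρ hρinj hσ hN b u hu S hS hbS (C / A) A M (by linarith) hM (by linarith) hρb hAb hA3
          ⟨0, by omega⟩ (t _) ℓ hℓ (ht _) (hbt _) p hp hpl γ ζ hζ h
      · intro j
        obtain ⟨q, hq, g, hqu, hg, hg2, h0, hj, hi, hgp⟩ := hloc j
        obtain ⟨l0, l1⟩ := aux_localpoly d b u f hf q hqu g hg hg2 j h0 hj hi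
        obtain ⟨Ψ, hΨ⟩ := aux_local x q f (hlift q) l0 l1
        exact ⟨q, Ψ, g, g⁻¹, hΨ, h0, hj, hi, hgp p hp hpl⟩


open NumberField
set_option maxHeartbeats 2000000 in
theorem aux_family (d ℓ : ℕ) (hd : 2 ≤ d) (hℓ : 1 ≤ ℓ) :
    ∃ (E D : ℝ) (b0 : Fin d → ℝ) (a : ℕ → ℤ), 0 < E ∧ 0 < D ∧ Function.Injective a ∧ ∀ k : ℕ,
      0 ≤ (a k : ℝ) ∧ (a k : ℝ) ≤ E * ((k : ℝ) + 1) ^ ℓ ∧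
      ∃ (K : IntermediateField ℚ ℂ) (_ : FiniteDimensional ℚ K) (x : 𝓞 K) (σ : Fin (d + 1) → (K →+* ℝ)),
      Module.finrank ℚ K = d + 1 ∧ (∀ i : Fin d, |σ i.castSucc x - b0 i| ≤ E / ((k : ℝ) + 1) ^ ℓ) ∧
      |σ (Fin.last d) x - a k| ≤ 1 / 4 ∧
      Function.Bijective σ ∧
      (∀ z : 𝓞 K, z ≠ 0 → 1 ≤ ∏ i, |σ i z|) ∧
      (|(discr K : ℝ)| ≤ D * ((k : ℝ) + 1) ^ (2 * d * ℓ)) ∧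
      (∃ c : ClassGroup (𝓞 K), orderOf c = ℓ) := by
  obtain ⟨u, b0, w0, N, hu, hb0, hN, H⟩ := aux_param d ℓ hd hℓ
  choose b t hb hw ht hbt hc hloc using H
  have hu' : (1 : ℝ) ≤ u := by exact_mod_cast hu
  set S : ℝ := 1 + ∑ i, |(b0 i : ℝ)| with hS
  have hS1 : 1 ≤ S := by
    have : 0 ≤ ∑ i, |(b0 i : ℝ)| := Finset.sum_nonneg fun _ _ => abs_nonneg _
    linarith
  have hbS : ∀ i, |(b0 i : ℝ)| ≤ S := fun i => by
    have := Finset.single_le_sum (f := fun i => |(b0 i : ℝ)|) (fun _ _ => abs_nonneg _) (Finset.mem_univ i)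
    linarith [this]
  set M : ℝ := u * (S + 1) + 1 with hM
  set C : ℝ := 2 ^ d * 4 * (u * (S + 1) + 1) with hC
  have h2d : (1 : ℝ) ≤ 2 ^ d := one_le_pow₀ (by norm_num)
  have hMS : S + 2 ≤ M := by rw [hM]; nlinarith
  have hCM : 4 * M ≤ C := by rw [hC, ← hM]; nlinarith
  have hCpos : 0 < C := by linarith
  have hMpos : 0 < M := by linarith
  set P : ℝ := (2 * S + 1) ^ d with hP
  have hPpos : 0 < P := by positivity
  set Q : ℝ := u * C * (2 * M) ^ d * (2 * M) with hQ
  have hQpos : 0 < Q := by positivity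
  set A0 : ℝ := 4 * C + C * P + Q ^ 2 + 1 with hA0
  have hA0pos : 0 < A0 := by positivity
  obtain ⟨k0, hk0⟩ := exists_nat_ge (2 * u * A0 + 2)
  have hk02 : (2 : ℝ) ≤ k0 := le_trans (by nlinarith) hk0
  let W : ℝ := w0 + N + k0 * N
  have hNr : (1 : ℝ) ≤ N := by exact_mod_cast hN
  have hW : 1 ≤ W := by
    have : (0 : ℝ) ≤ w0 + k0 * N := by positivity
    simp only [W]; linarith
  let a : ℕ → ℤ := fun k => b (k + k0) (Fin.last d)
  let w : ℕ → ℕ := fun k => t (k + k0) (Fin.last d)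
  have hwe : ∀ k, w k = w0 + (k + k0) * N := fun k => hw (k + k0)
  have haw : ∀ k, u * a k + 1 = (w k : ℤ) ^ ℓ := fun k => hbt (k + k0) _
  have hawr : ∀ k, (u : ℝ) * a k + 1 = (w k : ℝ) ^ ℓ := fun k => by exact_mod_cast haw k
  have hainj : Function.Injective a := by
    intro k k' h
    have h1 := haw k
    rw [h, haw k'] at h1
    have h2 : (w k') ^ ℓ = (w k) ^ ℓ := by exact_mod_cast h1
    have h3 := Nat.pow_left_injective (by omega : ℓ ≠ 0) h2
    rw [hwe, hwe] at h3
    have h4 := Nat.eq_of_mul_eq_mul_right hN (Nat.add_left_cancel h3)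
    omega
  have hwlow : ∀ k : ℕ, (k : ℝ) + k0 ≤ w k := by
    intro k
    have : (w k : ℝ) = w0 + (k + k0) * N := by rw [hwe]; push_cast; ring
    rw [this]
    have h1 : (0 : ℝ) ≤ w0 := by positivity
    have h2 : (0 : ℝ) ≤ (k : ℝ) + k0 := by positivity
    nlinarith
  have hwup : ∀ k : ℕ, (w k : ℝ) ≤ W * (k + 1) := by
    intro k
    have : (w k : ℝ) = w0 + (k + k0) * N := by rw [hwe]; push_cast; ring
    rw [this]
    simp only [W]
    have h1 : (0 : ℝ) ≤ w0 * k + N + k0 * N * k := by positivity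
    nlinarith
  have hk0' : ∀ k : ℕ, (0 : ℝ) ≤ k := fun k => by positivity
  have hwp : ∀ k, (w k : ℝ) ≤ (w k : ℝ) ^ ℓ := fun k =>
    le_self_pow₀ (by have := hwlow k; have := hk0' k; linarith) (by omega)
  have halow : ∀ k, (w k : ℝ) ^ ℓ ≤ 2 * u * a k := by
    intro k
    have h1 := hawr k
    have h2 := hwp k
    have h3 := hwlow k
    have h4 := hk0' k
    nlinarith
  have haA0 : ∀ k, A0 ≤ a k := by
    intro k
    have h1 := halow k
    have h2 := hwp k
    have h3 := hwlow k
    have h4 := hk0' k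
    by_contra hcon
    push Not at hcon
    have h5 := mul_lt_mul_of_pos_left hcon (by positivity : (0 : ℝ) < 2 * u)
    linarith
  have hapos : ∀ k, (0 : ℝ) < a k := fun k => lt_of_lt_of_le hA0pos (haA0 k)
  have haup : ∀ k : ℕ, (a k : ℝ) ≤ W ^ ℓ * ((k : ℝ) + 1) ^ ℓ := by
    intro k
    rw [← mul_pow]
    have h1 : (w k : ℝ) ^ ℓ ≤ (W * (k + 1)) ^ ℓ := pow_le_pow_left₀ (by positivity) (hwup k) _
    have h2 := hawr k
    have h3 := hapos k
    have h4 : (a k : ℝ) ≤ u * a k := le_mul_of_one_le_left h3.le hu'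
    linarith
  have halow2 : ∀ k : ℕ, ((k : ℝ) + 1) ^ ℓ ≤ 2 * u * a k := by
    intro k
    refine le_trans (pow_le_pow_left₀ (by positivity) ?_ _) (halow k)
    have := hwlow k
    linarith
  have hWpos : 0 < W := by linarith
  refine ⟨2 * u * C + W ^ ℓ, (2 * W ^ ℓ * P) ^ (2 * d), fun i => b0 i, a, by positivity, by positivity, hainj, fun k => ⟨(hapos k).le, ?_, ?_⟩⟩
  · refine (haup k).trans ?_
    have : 0 ≤ 2 * u * C * ((k : ℝ) + 1) ^ ℓ := by positivity
    linarith
  have hA1 : 4 * C ≤ a k := le_trans (by rw [hA0]; nlinarith [mul_pos hCpos hPpos, sq_nonneg Q]) (haA0 k)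
  have hbinj : Function.Injective (b (k + k0)) := by
    have hl : ∀ i : Fin d, b (k + k0) i.castSucc ≠ b (k + k0) (Fin.last d) := by
      intro i h
      have h1 : (b0 i : ℝ) = a k := by rw [hb] at h; exact_mod_cast h
      have h2 := (le_abs_self _).trans (hbS i)
      rw [h1] at h2
      linarith
    intro i j
    refine Fin.lastCases ?_ (fun i => ?_) i <;> refine Fin.lastCases ?_ (fun j => ?_) j
    · intro _; rfl
    · intro h; exact absurd h.symm (hl j)
    · intro h; exact absurd h (hl i)
    · intro h; rw [hb, hb] at h; rw [hb0 h]
  have hCA : C / a k ≤ (2 * u * C + W ^ ℓ) / ((k : ℝ) + 1) ^ ℓ := by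
    rw [div_le_div_iff₀ (hapos k) (by positivity)]
    have h1 := mul_le_mul_of_nonneg_left (halow2 k) hCpos.le
    have h2 : 0 ≤ W ^ ℓ * a k := mul_nonneg (by positivity) (hapos k).le
    nlinarith
  obtain ⟨K, hK, x, σ, h1, h2, h3, h4, h5, h6⟩ := aux_main d ℓ hd hℓ u hu (b (k + k0)) hbinj (t (k + k0)) (ht _) (hbt _) (hc _) (hloc _)
    S hS1 (fun i => by rw [hb]; exact hbS i) (a k) M C rfl hM hC hA1
    (by
      rw [div_mul_eq_mul_div, div_lt_one (hapos k)]
      refine lt_of_lt_of_le ?_ (haA0 k)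
      rw [hA0]; nlinarith [sq_nonneg Q])
    (by
      have hs : Q < √(a k) := by
        apply Real.lt_sqrt_of_sq_lt
        refine lt_of_lt_of_le ?_ (haA0 k)
        rw [hA0]; nlinarith [mul_pos hCpos hPpos]
      have hs0 : 0 < √(a k : ℝ) := hQpos.trans hs
      have hss : √(a k : ℝ) * √(a k : ℝ) = a k := Real.mul_self_sqrt (hapos k).le
      have : u * (C / a k) * (2 * M) ^ d * (2 * M * √(a k : ℝ)) = Q / √(a k : ℝ) := by
        rw [eq_div_iff hs0.ne', hQ]
        have h0 := (hapos k).ne'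
        calc _ = u * (C / a k) * (2 * M) ^ d * (2 * M) * (√(a k : ℝ) * √(a k : ℝ)) := by ring
          _ = _ := by rw [hss]; field_simp
      rw [this, div_lt_one hs0]
      exact hs)
  refine ⟨K, hK, x, σ, h1, fun i => ?_, ?_, h3, h4, h5.trans ?_, h6⟩
  · have := h2 i.castSucc
    rw [hb] at this
    exact this.trans hCA
  · refine (h2 (Fin.last d)).trans ?_
    rw [div_le_iff₀ (hapos k)]; linarith
  · have : (2 * W ^ ℓ * P) ^ (2 * d) * ((k : ℝ) + 1) ^ (2 * d * ℓ) = (2 * (W ^ ℓ * ((k : ℝ) + 1) ^ ℓ) * P) ^ (2 * d) := by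
      rw [mul_comm (2 * d) ℓ, pow_mul ((k : ℝ) + 1) ℓ]; generalize W ^ ℓ = W1; generalize ((k : ℝ) + 1) ^ ℓ = k1; rw [← mul_pow]; congr 1; ring
    rw [this]
    have h0 := (hapos k).le
    refine pow_le_pow_left₀ (by positivity) ?_ _
    have := haup k
    gcongr
theorem aux_count (I : Finset ℕ) (s : Setoid ℕ) (B : ℕ)
    (h : ∀ k₀ ∈ I, ∀ F : Finset ℕ, F ⊆ I → (∀ k ∈ F, s k k₀) → F.card ≤ B) :
    ∃ (m : ℕ) (f : Fin m → ℕ), (∀ i, f i ∈ I) ∧ (∀ i j, i ≠ j → ¬ s (f i) (f j)) ∧ I.card ≤ B * m := by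
  classical
  let J : Finset (Quotient s) := I.image (Quotient.mk s)
  have hJ : ∀ q : J, ∃ k ∈ I, Quotient.mk s k = q := fun q => Finset.mem_image.1 q.2
  choose r hr hrq using hJ
  let e := J.equivFin
  refine ⟨J.card, fun i => r (e.symm i), fun i => hr _, fun i j hij hs => hij ?_, ?_⟩
  · have := Quotient.sound hs
    rw [hrq, hrq] at this
    exact e.symm.injective (Subtype.ext this)
  · refine Finset.card_le_mul_card_image I B fun q hq => ?_
    obtain ⟨k₀, hk₀, rfl⟩ := Finset.mem_image.1 hq
    exact h k₀ hk₀ _ (Finset.filter_subset _ _) fun k hk => Quotient.exact (Finset.mem_filter.1 hk).2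

theorem aux_fiber (d : ℕ) (a : ℕ → ℤ) (ha : Function.Injective a) (b0 : Fin d → ℝ) (δ T : ℝ) (hδ : 0 ≤ δ)
    (K : ℕ → IntermediateField ℚ ℂ) (x : ∀ k, 𝓞 (K k))
    (σ : ∀ k, Fin (d + 1) → (K k →+* ℝ)) (hσ : ∀ k, Function.Bijective (σ k))
    (hN : ∀ k (z : 𝓞 (K k)), z ≠ 0 → 1 ≤ ∏ i, |σ k i z|)
    (hlast : ∀ k, |σ k (Fin.last d) (x k) - a k| ≤ 1 / 4)
    (F : Finset ℕ) (hF : ∀ k ∈ F, 0 ≤ (a k : ℝ) ∧ (a k : ℝ) ≤ T ∧ ∀ i : Fin d, |σ k i.castSucc (x k) - b0 i| ≤ δ)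
    (hlt : (2 * δ) ^ d * (T + 1) < 1) (k₀ : ℕ) (hiso : ∀ k ∈ F, Nonempty (K k ≃+* K k₀)) :
    F.card ≤ (d + 1) ^ (d + 1) := by
  classical
  let ψ : ∀ k : F, K k ≃+* K k₀ := fun k => (hiso k k.2).some
  have : ∀ (k : F) (i : Fin (d + 1)), ∃ j, σ k j = (σ k₀ i).comp (ψ k : K k →+* K k₀) := fun k i => (hσ k).2 _
  choose π hπ using this
  have hπinj : ∀ k, Function.Injective (π k) := by
    intro k i j hij
    apply (hσ k₀).1
    have h1 := hπ k i
    rw [hij, hπ k j] at h1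
    ext y
    have := RingHom.congr_fun h1 ((ψ k).symm y)
    simpa using this.symm
  have hπbij : ∀ k, Function.Bijective (π k) := fun k => Finite.injective_iff_bijective.1 (hπinj k)
  have hval : ∀ (k : F) (i) (y : K k), σ k₀ i (ψ k y) = σ k (π k i) y := fun k i y => by
    rw [hπ]; rfl
  have key : Function.Injective π := by
    intro k k' hkk
    let y : F → 𝓞 (K k₀) := fun k => ⟨ψ k (x k), by
      have := (x k).2
      exact (RingOfIntegers.isIntegral_coe (x k)).map (ψ k : K k →+* K k₀).toIntAlgHom⟩
    have hy : ∀ k, ((y k : 𝓞 (K k₀)) : K k₀) = ψ k (x k) := fun k => rfl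
    have hz : y k - y k' = 0 := by
      by_contra hne
      have h1 := hN k₀ _ hne
      have h2 : ∏ i, |σ k₀ i ((y k - y k' : 𝓞 (K k₀)) : K k₀)| = ∏ j, |σ k j (x k) - σ k' j (x k')| := by
        rw [← (hπbij k).prod_comp (fun j => |σ k j (x k) - σ k' j (x k')|)]
        refine Finset.prod_congr rfl fun i _ => ?_
        have : ((y k - y k' : 𝓞 (K k₀)) : K k₀) = ψ k (x k) - ψ k' (x k') := rfl
        rw [this, map_sub, hval, hval, ← hkk]
      rw [h2, Fin.prod_univ_castSucc] at h1
      have h3 : ∏ i : Fin d, |σ k i.castSucc (x k) - σ k' i.castSucc (x k')| ≤ (2 * δ) ^ d := by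
        calc _ ≤ ∏ i : Fin d, (2 * δ) := by
              refine Finset.prod_le_prod (fun _ _ => abs_nonneg _) fun i _ => ?_
              have e1 := abs_le.1 ((hF k k.2).2.2 i)
              have e2 := abs_le.1 ((hF k' k'.2).2.2 i)
              rw [abs_le]; constructor <;> linarith
          _ = _ := by simp
      have h4 : |σ k (Fin.last d) (x k) - σ k' (Fin.last d) (x k')| ≤ T + 1 := by
        have e1 := abs_le.1 (hlast k)
        have e2 := abs_le.1 (hlast k')
        have e3 := hF k k.2
        have e4 := hF k' k'.2
        rw [abs_le]; constructor <;> linarith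
      have h5 := mul_le_mul h3 h4 (abs_nonneg _) (by positivity)
      linarith
    have hz' : ψ k (x k) = ψ k' (x k') := by
      have := congrArg (fun z : 𝓞 (K k₀) => (z : K k₀)) (sub_eq_zero.1 hz)
      simpa [hy] using this
    obtain ⟨i, hi⟩ := (hπbij k).2 (Fin.last d)
    have h6 := congrArg (σ k₀ i) hz'
    rw [hval, hval, ← hkk, hi] at h6
    have e1 := abs_le.1 (hlast k)
    have e2 := abs_le.1 (hlast k')
    have h7 : |(a k : ℝ) - a k'| < 1 := by
      rw [abs_lt]; constructor <;> linarith
    have h8 : |a k - a k'| < 1 := by exact_mod_cast h7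
    have h9 := Int.abs_lt_one_iff.1 h8
    exact Subtype.ext (ha (by omega))
  have := Fintype.card_le_of_injective π key
  simpa using this

open NumberField
theorem aux_small (d ℓ : ℕ) (hd : 2 ≤ d) (hℓ : 1 ≤ ℓ) (E : ℝ) (hE : 0 < E) :
    ∃ R0 : ℝ, 1 ≤ R0 ∧ ∀ R : ℝ, R0 ≤ R → (2 * (E / R ^ ℓ)) ^ d * (E * (2 * R) ^ ℓ + 1) < 1 := by
  refine ⟨2 * E + 4 * E ^ 2 * (E * 2 ^ ℓ + 1) + 1, ?_, fun R hR => ?_⟩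
  · have : 0 < 2 * E + 4 * E ^ 2 * (E * 2 ^ ℓ + 1) := by positivity
    linarith
  have hB : 0 < 4 * E ^ 2 * (E * 2 ^ ℓ + 1) := by positivity
  have hR1 : 1 ≤ R := by linarith
  have hRy : R ≤ R ^ ℓ := le_self_pow₀ hR1 (by omega)
  rw [mul_pow 2 R ℓ]
  set y := R ^ ℓ with hy
  have hy0 : 0 < y := by linarith
  have h1 : 2 * (E / y) ≤ 1 := by
    rw [← mul_div_assoc, div_le_one hy0]; linarith
  have h2 : (2 * (E / y)) ^ d ≤ (2 * (E / y)) ^ 2 := pow_le_pow_of_le_one (by positivity) h1 hd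
  have h3 : E * (2 ^ ℓ * y) + 1 ≤ (E * 2 ^ ℓ + 1) * y := by nlinarith
  calc _ ≤ (2 * (E / y)) ^ 2 * ((E * 2 ^ ℓ + 1) * y) := mul_le_mul h2 h3 (by positivity) (by positivity)
    _ = 4 * E ^ 2 * (E * 2 ^ ℓ + 1) / y := by field_simp; ring
    _ < 1 := by rw [div_lt_one hy0]; linarith

/-- Let `n ≥ 3` and `ℓ ≥ 1` be integers and put `μ = 1/(2(n−1)ℓ)`.  There exist
`X₀ > 0` and `c > 0` (depending only on `n` and `ℓ`) such that for every real
`X > X₀` there exist at least `c·X^μ` pairwise non-isomorphic number fields of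
degree `n` over `ℚ`, with absolute discriminant at most `X`, whose ideal class
group contains an element of order exactly `ℓ`. -/
theorem class_group_element_of_order_count (n ℓ : ℕ) (hn : 3 ≤ n) (hℓ : 1 ≤ ℓ) :
    ∃ X₀ c : ℝ, 0 < X₀ ∧ 0 < c ∧
      ∀ X : ℝ, X₀ < X →
        ∃ (m : ℕ) (K : Fin m → IntermediateField ℚ ℂ),
          c * X ^ ((1 : ℝ) / (2 * ((n : ℝ) - 1) * (ℓ : ℝ))) ≤ (m : ℝ) ∧
          (∀ i j : Fin m, i ≠ j → IsEmpty ((K i) ≃+* (K j))) ∧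
          ∀ i : Fin m,
            ∃ h : FiniteDimensional ℚ (K i),
              Module.finrank ℚ (K i) = n ∧
              (haveI := h;
                |(NumberField.discr (K i) : ℝ)| ≤ X ∧
                ∃ C : ClassGroup (NumberField.RingOfIntegers (K i)), orderOf C = ℓ) := by
  obtain ⟨d, rfl⟩ : ∃ d, n = d + 1 := ⟨n - 1, by omega⟩
  have hd : 2 ≤ d := by omega
  obtain ⟨E, D, b0, a, hE, hD, ha, H⟩ := aux_family d ℓ hd hℓ
  choose ha0 haE K hK x σ hrank hclose hlast hσ hN hdisc hcl using H
  obtain ⟨R0, hR0, hsmall⟩ := aux_small d ℓ hd hℓ E hE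
  set e : ℕ := 2 * d * ℓ with he
  have he0 : e ≠ 0 := by positivity
  have her : (1 : ℝ) / (2 * (((d + 1 : ℕ) : ℝ) - 1) * (ℓ : ℝ)) = (e : ℝ)⁻¹ := by
    rw [he]; push_cast; rw [one_div]; congr 1; ring
  rw [her]
  set B : ℕ := (d + 1) ^ (d + 1) with hB
  have hBpos : (0 : ℝ) < B := by rw [hB]; positivity
  set V : ℝ := 2 * R0 + 4 with hV
  refine ⟨D * V ^ e, (D ^ (e : ℝ)⁻¹)⁻¹ / (4 * B), by positivity, by positivity, fun X hX => ?_⟩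
  have hX0 : 0 < X := lt_trans (by positivity) hX
  set Y : ℝ := (X / D) ^ (e : ℝ)⁻¹ with hY
  have hYpos : 0 < Y := by positivity
  have hYe : Y ^ e = X / D := Real.rpow_inv_natCast_pow (by positivity) he0
  have hVY : V < Y := by
    apply lt_of_pow_lt_pow_left₀ e hYpos.le
    rw [hYe, lt_div_iff₀ hD, mul_comm]; exact hX
  set R : ℕ := ⌊Y / 2⌋₊ with hR
  have hR1 : (R : ℝ) ≤ Y / 2 := Nat.floor_le (by positivity)
  have hR2 : Y / 2 < R + 1 := Nat.lt_floor_add_one _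
  have hRR0 : R0 ≤ R := by linarith
  have hRpos : (0 : ℝ) < R := by linarith
  let s : Setoid ℕ := ⟨fun k k' => Nonempty (K k ≃+* K k'),
    ⟨fun _ => ⟨RingEquiv.refl _⟩, fun ⟨f⟩ => ⟨f.symm⟩, fun ⟨f⟩ ⟨g⟩ => ⟨f.trans g⟩⟩⟩
  have hI : ∀ k ∈ Finset.Ico R (2 * R), (R : ℝ) ≤ (k : ℝ) + 1 ∧ (k : ℝ) + 1 ≤ 2 * R := by
    intro k hk
    rw [Finset.mem_Ico] at hk
    constructor
    · exact_mod_cast (by omega : R ≤ k + 1)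
    · exact_mod_cast (by omega : k + 1 ≤ 2 * R)
  obtain ⟨m, f, hf, hfs, hm⟩ := aux_count (Finset.Ico R (2 * R)) s B (by
    intro k₀ _ F hF hs
    refine aux_fiber d a ha b0 (E / R ^ ℓ) (E * (2 * R) ^ ℓ) (by positivity) K x σ hσ hN hlast F ?_ (hsmall R hRR0) k₀ hs
    intro k hk
    obtain ⟨h1, h2⟩ := hI k (hF hk)
    refine ⟨ha0 k, (haE k).trans ?_, fun i => (hclose k i).trans ?_⟩
    · gcongr
    · gcongr)
  refine ⟨m, fun i => K (f i), ?_, fun i j hij => not_nonempty_iff.1 (hfs i j hij), fun i => ⟨hK _, hrank _, (hdisc _).trans ?_, hcl _⟩⟩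
  · have hm' : (R : ℝ) ≤ B * m := by
      have : R ≤ B * m := by simpa [two_mul] using hm
      exact_mod_cast this
    have h1 : (D ^ (e : ℝ)⁻¹)⁻¹ / (4 * B) * X ^ (e : ℝ)⁻¹ = Y / (4 * B) := by
      rw [hY, Real.div_rpow hX0.le hD.le]; ring
    rw [h1, div_le_iff₀ (by positivity)]
    linarith
  · obtain ⟨_, h2⟩ := hI _ (hf i)
    calc D * ((f i : ℝ) + 1) ^ e ≤ D * Y ^ e := by
          gcongr; linarith
      _ = X := by rw [hYe]; field_simp
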